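/- arXiv:0711.3073 — 3 statements merged into one kernel-verified Lean document; each statement's English description precedes it below -/
import Mathlib

section
/- Let q ∈ ℝ, let H be a complex Hilbert space with orthonormal basis (e_n)_{n∈ℤ}, let (τ_n)_{n∈ℤ} be nonnegative reals, and let T be the bilateral weighted shift with domain D := span{e_n : n ∈ ℤ} given by T e_n = τ_n e_{n+1} (so T* e_n = τ_{n−1} e_{n−1}). Then T* T f − q T T* f = f for all f ∈ D if and only if τ_n² = 1 + q τ_{n−1}² for all n ∈ ℤ. Consequently: (a) if q < 0 and q ≠ −1, then necessarily τ_n = (1 − q)^{−1/2} for all n ∈ ℤ (so T is normal); (b) if 0 ≤ q < 1, then necessarily τ_0² ≥ (1 − q)^{−1}; (c) if q ≥ 1, then no such family of nonnegative weights exists. -/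
noncomputable section

section AffineRecurrence

variable {q : ℝ} {x : ℤ → ℝ}

/-- Iterating `x n = 1 + q * x (n - 1)` around its fixed point `(1 - q)⁻¹`. -/
lemma sub_fixedPoint_eq_pow_mul (hq : q ≠ 1) (hx : ∀ n, x n = 1 + q * x (n - 1)) (n : ℤ) (k : ℕ) :
    x n - (1 - q)⁻¹ = q ^ k * (x (n - k) - (1 - q)⁻¹) := by
  have hc : (1 - q)⁻¹ = 1 + q * (1 - q)⁻¹ := by
    have : 1 - q ≠ 0 := sub_ne_zero.mpr hq.symm
    field_simp
    ring
  induction k with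
  | zero => simp
  | succ k ih =>
    have h := hx (n - k)
    rw [show n - (k : ℤ) - 1 = n - ((k + 1 : ℕ) : ℤ) by push_cast; ring] at h
    rw [ih, pow_succ]
    linear_combination q ^ k * h - q ^ k * hc

lemma eq_fixedPoint_of_neg (hq : q < 0) (hq' : q ≠ -1) (h0 : ∀ n, 0 ≤ x n)
    (hx : ∀ n, x n = 1 + q * x (n - 1)) (n : ℤ) : x n = (1 - q)⁻¹ := by
  have hc0 : 0 < (1 - q)⁻¹ := inv_pos.mpr (by linarith)
  have hc1 : (1 - q)⁻¹ ≤ 1 := inv_le_one_of_one_le₀ (by linarith)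
  have hbound (m : ℤ) : |x m - (1 - q)⁻¹| ≤ 1 := by
    have h1 : x m ≤ 1 := by nlinarith [hx m, h0 (m - 1)]
    rw [abs_le]
    constructor <;> linarith [h0 m]
  have hiter (m : ℤ) (k : ℕ) :
      |x m - (1 - q)⁻¹| = |q| ^ k * |x (m - k) - (1 - q)⁻¹| := by
    rw [sub_fixedPoint_eq_pow_mul (by linarith) hx m k, abs_mul, abs_pow]
  rw [← sub_eq_zero, ← abs_nonpos_iff]
  rcases lt_or_gt_of_ne (show |q| ≠ 1 by rw [abs_of_neg hq]; contrapose! hq'; linarith) with h | h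
  · refine ge_of_tendsto' (tendsto_pow_atTop_nhds_zero_of_lt_one (abs_nonneg q) h) fun k => ?_
    rw [hiter n k]
    exact mul_le_of_le_one_right (by positivity) (hbound _)
  · by_contra! hpos
    obtain ⟨k, hk⟩ := pow_unbounded_of_one_lt (|x n - (1 - q)⁻¹|)⁻¹ h
    have h1 := hiter (n + k) k
    rw [add_sub_cancel_right] at h1
    have h2 := hbound (n + k)
    rw [inv_lt_iff_one_lt_mul₀ hpos] at hk
    linarith

lemma fixedPoint_le_of_lt_one (hq : 0 ≤ q) (hq' : q < 1) (h0 : ∀ n, 0 ≤ x n)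
    (hx : ∀ n, x n = 1 + q * x (n - 1)) (n : ℤ) : (1 - q)⁻¹ ≤ x n := by
  have hlim : Filter.Tendsto (fun k : ℕ => q ^ k * -(1 - q)⁻¹) Filter.atTop (nhds 0) := by
    simpa using (tendsto_pow_atTop_nhds_zero_of_lt_one hq hq').mul_const (-(1 - q)⁻¹)
  rw [← sub_nonneg]
  refine le_of_tendsto' hlim fun k => ?_
  rw [sub_fixedPoint_eq_pow_mul hq'.ne hx n k]
  exact mul_le_mul_of_nonneg_left (by linarith [h0 (n - k)]) (by positivity)

lemma not_affineRecurrence_of_one_le (hq : 1 ≤ q) (h0 : ∀ n, 0 ≤ x n) :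
    ¬ ∀ n, x n = 1 + q * x (n - 1) := by
  intro hx
  have hk (k : ℕ) : k + x (-k) ≤ x 0 := by
    induction k with
    | zero => simp
    | succ k ih =>
      have h := hx (-k)
      rw [show -(k : ℤ) - 1 = -((k + 1 : ℕ) : ℤ) by push_cast; ring] at h
      push_cast at h ih ⊢
      nlinarith [h0 (-(k + 1))]
  obtain ⟨k, hk'⟩ := exists_nat_gt (x 0)
  linarith [hk k, h0 (-k)]

end AffineRecurrence

section WeightedShift

open scoped LinearPMap

variable {H : Type*} [NormedAddCommGroup H] [InnerProductSpace ℂ H]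
  {e : HilbertBasis ℤ ℂ H} {τ : ℤ → ℝ} {T : H →ₗ.[ℂ] H}

lemma dense_domain_of_eq_span (hdom : T.domain = Submodule.span ℂ (Set.range (e : ℤ → H))) :
    Dense (T.domain : Set H) := by
  rw [hdom]
  exact Submodule.dense_iff_topologicalClosure_eq_top.mpr e.dense_span

lemma weightedShift_mem_graph (hdom : T.domain = Submodule.span ℂ (Set.range (e : ℤ → H)))
    (hval : ∀ (n : ℤ) (hn : e n ∈ T.domain), T ⟨e n, hn⟩ = (τ n : ℂ) • e (n + 1)) (n : ℤ) :
    (e n, (τ n : ℂ) • e (n + 1)) ∈ T.graph := by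
  have hn : e n ∈ T.domain := hdom ▸ Submodule.subset_span ⟨n, rfl⟩
  exact (LinearPMap.mem_graph_iff T).mpr ⟨⟨e n, hn⟩, rfl, hval n hn⟩

variable [CompleteSpace H]

lemma weightedShift_adjoint_mem_graph
    (hdom : T.domain = Submodule.span ℂ (Set.range (e : ℤ → H)))
    (hval : ∀ (n : ℤ) (hn : e n ∈ T.domain), T ⟨e n, hn⟩ = (τ n : ℂ) • e (n + 1)) (n : ℤ) :
    (e n, (τ (n - 1) : ℂ) • e (n - 1)) ∈ T†.graph := by
  rw [LinearPMap.adjoint_graph_eq_graph_adjoint (dense_domain_of_eq_span hdom),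
    Submodule.mem_adjoint_iff]
  suffices h : ∀ a ∈ Submodule.span ℂ (Set.range (e : ℤ → H)), ∃ b, (a, b) ∈ T.graph ∧
      inner ℂ b (e n) - inner ℂ a ((τ (n - 1) : ℂ) • e (n - 1)) = 0 by
    intro a b hab
    obtain ⟨b', hab', h'⟩ := h a (hdom ▸ LinearPMap.mem_domain_of_mem_graph hab)
    obtain rfl := LinearPMap.mem_graph_snd_inj' T hab hab' rfl
    exact h'
  intro a ha
  induction ha using Submodule.span_induction with
  | mem a ha =>
    obtain ⟨m, rfl⟩ := ha
    refine ⟨_, weightedShift_mem_graph hdom hval m, ?_⟩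
    simp only [inner_smul_left, inner_smul_right, orthonormal_iff_ite.mp e.orthonormal,
      Complex.conj_ofReal]
    by_cases h : m = n - 1
    · simp [h]
    · simp [h, show m + 1 ≠ n by omega]
  | zero => exact ⟨0, T.graph.zero_mem, by simp⟩
  | add a₁ a₂ _ _ h₁ h₂ =>
    obtain ⟨b₁, hb₁, h₁⟩ := h₁
    obtain ⟨b₂, hb₂, h₂⟩ := h₂
    refine ⟨b₁ + b₂, T.graph.add_mem hb₁ hb₂, ?_⟩
    rw [inner_add_left, inner_add_left]
    linear_combination h₁ + h₂
  | smul c a _ h =>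
    obtain ⟨b, hb, h⟩ := h
    refine ⟨c • b, T.graph.smul_mem c hb, ?_⟩
    rw [inner_smul_left, inner_smul_left]
    linear_combination (starRingEnd ℂ c) * h

/-- The relation `T* T f - q T T* f = f` at `f`, in terms of graphs. -/
lemma qRelation_iff_graph (q : ℂ) (f : H) (hf : f ∈ T.domain) :
    (∃ (h1 : (T ⟨f, hf⟩ : H) ∈ T.adjoint.domain) (h2 : f ∈ T.adjoint.domain)
        (h3 : (T.adjoint ⟨f, h2⟩ : H) ∈ T.domain),
        (T.adjoint ⟨T ⟨f, hf⟩, h1⟩ : H) - q • (T ⟨T.adjoint ⟨f, h2⟩, h3⟩ : H) = f) ↔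
      ∃ u v w z, (f, u) ∈ T.graph ∧ (u, v) ∈ T†.graph ∧ (f, w) ∈ T†.graph ∧ (w, z) ∈ T.graph ∧
        v - q • z = f := by
  constructor
  · rintro ⟨h1, h2, h3, h⟩
    exact ⟨_, _, _, _, T.mem_graph ⟨f, hf⟩, T†.mem_graph ⟨_, h1⟩, T†.mem_graph ⟨f, h2⟩,
      T.mem_graph ⟨_, h3⟩, h⟩
  · rintro ⟨u, v, w, z, hu, hv, hw, hz, h⟩
    simp only [LinearPMap.mem_graph_iff, Subtype.exists, exists_and_left, exists_eq_left]
      at hu hv hw hz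
    obtain ⟨_, rfl⟩ := hu
    obtain ⟨h1, rfl⟩ := hv
    obtain ⟨h2, rfl⟩ := hw
    obtain ⟨h3, rfl⟩ := hz
    exact ⟨h1, h2, h3, h⟩

lemma weightedShift_qRelation_iff (q : ℝ)
    (hdom : T.domain = Submodule.span ℂ (Set.range (e : ℤ → H)))
    (hval : ∀ (n : ℤ) (hn : e n ∈ T.domain), T ⟨e n, hn⟩ = (τ n : ℂ) • e (n + 1)) :
    (∀ f ∈ T.domain, ∃ u v w z, (f, u) ∈ T.graph ∧ (u, v) ∈ T†.graph ∧ (f, w) ∈ T†.graph ∧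
        (w, z) ∈ T.graph ∧ v - (q : ℂ) • z = f) ↔
      ∀ n : ℤ, τ n ^ 2 = 1 + q * τ (n - 1) ^ 2 := by
  have hT (n : ℤ) := weightedShift_mem_graph hdom hval n
  have hT' (n : ℤ) := weightedShift_adjoint_mem_graph hdom hval n
  have hTT (n : ℤ) : ((τ n : ℂ) • e (n + 1), ((τ n : ℂ) ^ 2) • e n) ∈ T†.graph := by
    simpa only [Prod.smul_mk, smul_smul, ← sq, add_sub_cancel_right] using T†.graph.smul_mem (τ n : ℂ) (hT' (n + 1))
  have hTT' (n : ℤ) :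
      ((τ (n - 1) : ℂ) • e (n - 1), ((τ (n - 1) : ℂ) ^ 2) • e n) ∈ T.graph := by
    simpa only [Prod.smul_mk, smul_smul, ← sq, sub_add_cancel] using T.graph.smul_mem (τ (n - 1) : ℂ) (hT (n - 1))
  constructor
  · intro h n
    obtain ⟨u, v, w, z, hu, hv, hw, hz, h⟩ :=
      h (e n) (LinearPMap.mem_domain_of_mem_graph (hT n))
    obtain rfl := LinearPMap.mem_graph_snd_inj' T hu (hT n) rfl
    obtain rfl := LinearPMap.mem_graph_snd_inj' T† hv (hTT n) rfl
    obtain rfl := LinearPMap.mem_graph_snd_inj' T† hw (hT' n) rfl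
    obtain rfl := LinearPMap.mem_graph_snd_inj' T hz (hTT' n) rfl
    rw [smul_smul, ← sub_smul] at h
    have he : e n ≠ 0 := e.orthonormal.ne_zero n
    have h1 : (τ n : ℂ) ^ 2 - q * (τ (n - 1) : ℂ) ^ 2 = 1 :=
      smul_left_injective ℂ he (by simpa using h)
    have h2 : τ n ^ 2 - q * τ (n - 1) ^ 2 = 1 := by exact_mod_cast h1
    linarith
  · intro h f hf
    rw [hdom] at hf
    induction hf using Submodule.span_induction with
    | mem f hf =>
      obtain ⟨n, rfl⟩ := hf
      refine ⟨_, _, _, _, hT n, hTT n, hT' n, hTT' n, ?_⟩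
      have h1 : (τ n : ℂ) ^ 2 = 1 + q * (τ (n - 1) : ℂ) ^ 2 := by exact_mod_cast h n
      rw [h1, smul_smul, ← sub_smul, add_sub_cancel_right, one_smul]
    | zero =>
      exact ⟨0, 0, 0, 0, T.graph.zero_mem, T†.graph.zero_mem, T†.graph.zero_mem,
        T.graph.zero_mem, by simp⟩
    | add f₁ f₂ _ _ h₁ h₂ =>
      obtain ⟨u₁, v₁, w₁, z₁, hu₁, hv₁, hw₁, hz₁, h₁⟩ := h₁
      obtain ⟨u₂, v₂, w₂, z₂, hu₂, hv₂, hw₂, hz₂, h₂⟩ := h₂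
      refine ⟨_, _, _, _, T.graph.add_mem hu₁ hu₂, T†.graph.add_mem hv₁ hv₂,
        T†.graph.add_mem hw₁ hw₂, T.graph.add_mem hz₁ hz₂, ?_⟩
      rw [smul_add, add_sub_add_comm, h₁, h₂]
    | smul c f _ h =>
      obtain ⟨u, v, w, z, hu, hv, hw, hz, h⟩ := h
      refine ⟨_, _, _, _, T.graph.smul_mem c hu, T†.graph.smul_mem c hv,
        T†.graph.smul_mem c hw, T.graph.smul_mem c hz, ?_⟩
      rw [smul_comm, ← smul_sub, h]

end WeightedShift

/-- Let `T` be the bilateral weighted shift `T e n = τ n • e (n+1)` with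
nonnegative weights, with domain the span of an orthonormal basis `(e n)_{n ∈ ℤ}`. Then
`T* T f - q T T* f = f` on the span iff `τ n ^ 2 = 1 + q * τ (n-1) ^ 2` for all `n : ℤ`.
Consequently: (a) if `q < 0`, `q ≠ -1`, the weights are constant `= (1-q)^{-1/2}`;
(b) if `0 ≤ q < 1` then `τ 0 ^ 2 ≥ (1-q)⁻¹`; (c) if `q ≥ 1` no such weights exist. -/
theorem stmt6 (q : ℝ) {H : Type*} [NormedAddCommGroup H] [InnerProductSpace ℂ H]
    [CompleteSpace H] (e : HilbertBasis ℤ ℂ H) (τ : ℤ → ℝ) (hτ : ∀ n, 0 ≤ τ n)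
    (T : H →ₗ.[ℂ] H)
    (hdom : T.domain = Submodule.span ℂ (Set.range (e : ℤ → H)))
    (hval : ∀ (n : ℤ) (hn : e n ∈ T.domain), T ⟨e n, hn⟩ = (τ n : ℂ) • e (n + 1)) :
    ((∀ f (hf : f ∈ T.domain),
        ∃ (h1 : (T ⟨f, hf⟩ : H) ∈ T.adjoint.domain) (h2 : f ∈ T.adjoint.domain)
          (h3 : (T.adjoint ⟨f, h2⟩ : H) ∈ T.domain),
          (T.adjoint ⟨T ⟨f, hf⟩, h1⟩ : H) - (q : ℂ) • (T ⟨T.adjoint ⟨f, h2⟩, h3⟩ : H) = f) ↔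
      (∀ n : ℤ, τ n ^ 2 = 1 + q * τ (n - 1) ^ 2)) ∧
    (q < 0 → q ≠ -1 → (∀ n : ℤ, τ n ^ 2 = 1 + q * τ (n - 1) ^ 2) →
      ∀ n : ℤ, τ n = (Real.sqrt (1 - q))⁻¹) ∧
    (0 ≤ q → q < 1 → (∀ n : ℤ, τ n ^ 2 = 1 + q * τ (n - 1) ^ 2) →
      (1 - q)⁻¹ ≤ τ 0 ^ 2) ∧
    (1 ≤ q → ¬ (∀ n : ℤ, τ n ^ 2 = 1 + q * τ (n - 1) ^ 2)) := by
  refine ⟨?_, fun hq hq' h n => ?_, fun hq hq' h => ?_, fun hq => ?_⟩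
  · rw [← weightedShift_qRelation_iff q hdom hval]
    exact forall₂_congr fun f hf => qRelation_iff_graph (q : ℂ) f hf
  · rw [← Real.sqrt_inv, ← eq_fixedPoint_of_neg (x := fun n => τ n ^ 2) hq hq'
      (fun n => sq_nonneg _) h n, Real.sqrt_sq (hτ n)]
  · exact fixedPoint_le_of_lt_one (x := fun n => τ n ^ 2) hq hq' (fun n => sq_nonneg _) h 0
  · exact not_affineRecurrence_of_one_le (x := fun n => τ n ^ 2) hq fun n => sq_nonneg _
end
end

section
/- Let 0 ≤ q < 1 and let S be a densely defined operator in a complex Hilbert space H satisfying (O_{q,D}) on a dense subspace D with S D ⊆ D and S* D ⊆ D and with D a core of S. Then the following are equivalent: (i) ‖S f‖ ≤ (1 − q)^{−1/2} ‖f‖ for all f ∈ dom S; (ii) S is bounded, i.e. there is M ≥ 0 with ‖S f‖ ≤ M ‖f‖ for all f ∈ dom S; (iii) S is subnormal; (iv) ‖S* f‖ ≤ ‖S f‖ for all f ∈ D. -/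
noncomputable section

universe u v

variable {H : Type u} [NormedAddCommGroup H] [InnerProductSpace ℂ H] [CompleteSpace H]

/-- `S` satisfies the commutation relation `(O_{q,D})` on the dense subspace `D`. -/
structure SatOqD (q : ℝ) (S : H →ₗ.[ℂ] H) (D : Submodule ℂ H) : Prop where
  denseDom : Dense (S.domain : Set H)
  denseD : Dense (D : Set H)
  closable : S.IsClosable
  memC : ∀ f, f ∈ D → f ∈ S.closure.domain
  memCA : ∀ f (hf : f ∈ D), (S.closure ⟨f, memC f hf⟩ : H) ∈ S.adjoint.domain
  memA : ∀ f, f ∈ D → f ∈ S.adjoint.domain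
  memAC : ∀ f (hf : f ∈ D), (S.adjoint ⟨f, memA f hf⟩ : H) ∈ S.closure.domain
  eqn : ∀ f (hf : f ∈ D),
    (S.adjoint ⟨S.closure ⟨f, memC f hf⟩, memCA f hf⟩ : H)
      - (q : ℂ) • (S.closure ⟨S.adjoint ⟨f, memA f hf⟩, memAC f hf⟩ : H) = f

/-- `D` is a core of the closable operator `S`. -/
def IsCoreOf (S : H →ₗ.[ℂ] H) (D : Submodule ℂ H) : Prop :=
  D ≤ S.domain ∧ (S.domRestrict D).closure = S.closure

/-- A densely defined operator `N` in a Hilbert space is *normal* if it is formally normal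
with `dom N = dom N*`. -/
structure IsNormalPMap {K : Type*} [NormedAddCommGroup K] [InnerProductSpace ℂ K]
    [CompleteSpace K] (N : K →ₗ.[ℂ] K) : Prop where
  dense : Dense (N.domain : Set K)
  dom_eq : N.domain = N.adjoint.domain
  norm_eq : ∀ f (hf : f ∈ N.domain), ‖N ⟨f, hf⟩‖ = ‖N.adjoint ⟨f, dom_eq ▸ hf⟩‖

/-- `B` (acting in `K`) extends `A` (acting in `H`), where `H` is embedded in `K` via `ι`. -/
def ExtendsVia {K : Type*} [NormedAddCommGroup K] [InnerProductSpace ℂ K] [CompleteSpace K]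
    (ι : H →ₗᵢ[ℂ] K) (A : H →ₗ.[ℂ] H) (B : K →ₗ.[ℂ] K) : Prop :=
  ∀ f (hf : f ∈ A.domain), ∃ hB : ι f ∈ B.domain, B ⟨ι f, hB⟩ = ι (A ⟨f, hf⟩)

/-- The data of a normal extension of `A`. -/
structure NormalExtension (A : H →ₗ.[ℂ] H) where
  K : Type v
  [nK : NormedAddCommGroup K]
  [iK : InnerProductSpace ℂ K]
  [cK : CompleteSpace K]
  ι : H →ₗᵢ[ℂ] K
  N : K →ₗ.[ℂ] K
  normal : IsNormalPMap N
  ext : ExtendsVia ι A N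

/-- A densely defined operator is *subnormal* if it admits a normal extension. -/
def IsSubnormalPMap (A : H →ₗ.[ℂ] H) : Prop :=
  Dense (A.domain : Set H) ∧ Nonempty (NormalExtension.{u, v} A)

/-- If `r` is nonnegative and `r²` intertwines `t` with a scaling `s²`, then `r` intertwines `t`
with the scaling `s`. -/
theorem mul_eq_smul_mul_of_sq {A : Type*} [CStarAlgebra A] [PartialOrder A] [StarOrderedRing A]
    {r t : A} (hr : 0 ≤ r) {s : ℝ} (hs : 0 ≤ s) (h : r * r * t = (s ^ 2) • (t * (r * r))) :
    r * t = s • (t * r) := by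
  have hsa : star r = r := (IsSelfAdjoint.of_nonneg hr).star_eq
  obtain ⟨y, hy⟩ : ∃ y, y = r * t - s • (t * r) := ⟨_, rfl⟩
  have hry : r * y = -(s • (y * r)) := by
    rw [hy, mul_sub, sub_mul, ← mul_assoc, h]
    simp only [mul_smul_comm, smul_mul_assoc, mul_assoc]
    module
  have cancel : ∀ z : A, r * (r * z) = 0 → r * z = 0 := fun z hz => by
    rw [← CStarRing.star_mul_self_eq_zero_iff, star_mul, hsa, mul_assoc, hz, mul_zero]
  suffices y = 0 by rwa [hy, sub_eq_zero] at this
  rcases hs.eq_or_lt with rfl | hs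
  · have : y = r * t := by simpa using hy
    rw [this]
    exact cancel t (by simpa [this] using hry)
  have hyr : star y * r = -(s • (r * star y)) := by
    simpa [hsa] using congr_arg star hry
  have hcomm : Commute r (star y * y) := by
    have h₁ : star y * (r * y) = -(s • (star y * y * r)) := by
      rw [hry]; simp only [mul_neg, mul_smul_comm, mul_assoc]
    have h₂ : star y * (r * y) = -(s • (r * (star y * y))) := by
      rw [← mul_assoc, hyr]; simp only [neg_mul, smul_mul_assoc, mul_assoc]
    exact smul_right_injective A hs.ne' (neg_injective (h₂.symm.trans h₁))
  have hpos : 0 ≤ star y * y * r := hcomm.symm.mul_nonneg (star_mul_self_nonneg y) hr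
  have hzero : star y * r * y = 0 := by
    refine le_antisymm ?_ (star_left_conjugate_nonneg hr y)
    rw [mul_assoc, hry, mul_neg, mul_smul_comm, ← mul_assoc]
    exact neg_nonpos.2 (smul_nonneg hs.le hpos)
  have hry0 : r * y = 0 := by
    have hq : star (CFC.sqrt r) = CFC.sqrt r :=
      (IsSelfAdjoint.of_nonneg (CFC.sqrt_nonneg r)).star_eq
    have hqy : CFC.sqrt r * y = 0 := by
      rw [← CStarRing.star_mul_self_eq_zero_iff, star_mul, hq, mul_assoc, ← mul_assoc _ _ y,
        CFC.sqrt_mul_sqrt_self r hr, ← mul_assoc, hzero]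
    rw [← CFC.sqrt_mul_sqrt_self r hr, mul_assoc, hqy, mul_zero]
  have hrsy : r * star y = 0 := by
    have : star y * r = 0 := by simpa [hsa] using congr_arg star hry0
    rw [hyr, neg_eq_zero] at this
    exact (smul_eq_zero.1 this).resolve_left hs.ne'
  rw [← CStarRing.mul_star_self_eq_zero_iff]
  have hyy : y * star y = r * (t * star y) := by
    nth_rewrite 1 [hy]
    rw [sub_mul, smul_mul_assoc, mul_assoc t, hrsy, mul_zero, smul_zero, sub_zero, mul_assoc]
  rw [hyy]
  exact cancel _ (by rw [← hyy, ← mul_assoc, hry0, zero_mul])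

section WeightedOperators

variable {H : Type u} [NormedAddCommGroup H]

theorem lp.memℓp_two_of_norm_le {ι : Type*} (g : ι → H) (f : lp (fun _ : ι => H) 2) (C : ℝ)
    (h : ∀ n, ‖g n‖ ≤ C * ‖f n‖) : Memℓp g 2 := by
  refine memℓp_gen (.of_nonneg_of_le (fun _ => by positivity) (fun n => ?_)
    (((lp.memℓp f).summable (by norm_num)).mul_left (C ^ 2)))
  have := pow_le_pow_left₀ (norm_nonneg _) (h n) 2
  simpa [mul_pow] using this

theorem lp.norm_le_of_forall_norm_le {ι : Type*} (g f : lp (fun _ : ι => H) 2) {C : ℝ}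
    (hC : 0 ≤ C) (h : ∀ n, ‖g n‖ ≤ C * ‖f n‖) : ‖g‖ ≤ C * ‖f‖ := by
  refine lp.norm_le_of_forall_sum_le (by norm_num) (by positivity) fun s => ?_
  have hf := lp.sum_rpow_le_norm_rpow (p := 2) (by norm_num) f s
  calc ∑ i ∈ s, ‖g i‖ ^ (2 : ENNReal).toReal
      ≤ ∑ i ∈ s, C ^ 2 * ‖f i‖ ^ (2 : ENNReal).toReal := by
        refine Finset.sum_le_sum fun n _ => ?_
        have := pow_le_pow_left₀ (norm_nonneg _) (h n) 2
        simpa [mul_pow] using this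
    _ ≤ C ^ 2 * ‖f‖ ^ (2 : ENNReal).toReal := by
        rw [← Finset.mul_sum]; gcongr
    _ = (C * ‖f‖) ^ (2 : ENNReal).toReal := by simp [mul_pow]

variable [InnerProductSpace ℂ H]

/-- The operator `(fₙ) ↦ (cₙ X fₙ)` on `ℓ²(ℕ, H)` for weights `|cₙ| ≤ 1`. -/
def weightedDiag (c : ℕ → ℝ) (hc : ∀ n, |c n| ≤ 1) (X : H →L[ℂ] H) :
    lp (fun _ : ℕ => H) 2 →L[ℂ] lp (fun _ : ℕ => H) 2 :=
  have bound : ∀ (x : H) n, ‖c n • X x‖ ≤ ‖X‖ * ‖x‖ := fun x n => by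
    rw [norm_smul, Real.norm_eq_abs]
    exact (mul_le_of_le_one_left (norm_nonneg _) (hc n)).trans (X.le_opNorm x)
  LinearMap.mkContinuous
    { toFun := fun f => ⟨fun n => c n • X (f n),
        lp.memℓp_two_of_norm_le _ f ‖X‖ fun n => bound (f n) n⟩
      map_add' := fun f g => lp.ext (funext fun n => by
        change c n • X (f n + g n) = c n • X (f n) + c n • X (g n)
        rw [map_add, smul_add])
      map_smul' := fun z f => lp.ext (funext fun n => by
        change c n • X (z • f n) = z • c n • X (f n)
        rw [map_smul, smul_comm]) }
    ‖X‖ fun f => lp.norm_le_of_forall_norm_le _ f (norm_nonneg X) fun n => bound (f n) n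

@[simp]
theorem weightedDiag_apply (c : ℕ → ℝ) (hc : ∀ n, |c n| ≤ 1) (X : H →L[ℂ] H)
    (f : lp (fun _ : ℕ => H) 2) (n : ℕ) : weightedDiag c hc X f n = c n • X (f n) := rfl

/-- The backward shift on `ℓ²(ℕ, H)`. -/
def backwardShift : lp (fun _ : ℕ => H) 2 →L[ℂ] lp (fun _ : ℕ => H) 2 :=
  have summ : ∀ f : lp (fun _ : ℕ => H) 2, Summable fun n => ‖f n‖ ^ (2 : ENNReal).toReal :=
    fun f => (lp.memℓp f).summable (by norm_num)
  LinearMap.mkContinuous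
    { toFun := fun f => ⟨fun n => f (n + 1), memℓp_gen ((summable_nat_add_iff 1).2 (summ f))⟩
      map_add' := fun f g => rfl
      map_smul' := fun z f => rfl }
    1 fun f => by
      rw [one_mul]
      refine lp.norm_le_of_tsum_le (by norm_num) (norm_nonneg f) ?_
      rw [lp.norm_rpow_eq_tsum (by norm_num) f, (summ f).tsum_eq_zero_add]
      exact le_add_of_nonneg_left (by positivity)

@[simp]
theorem backwardShift_apply (f : lp (fun _ : ℕ => H) 2) (n : ℕ) :
    backwardShift f n = f (n + 1) := rfl

variable [CompleteSpace H]

theorem adjoint_weightedDiag (c : ℕ → ℝ) (hc : ∀ n, |c n| ≤ 1) (X : H →L[ℂ] H) :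
    star (weightedDiag c hc X) = weightedDiag c hc (star X) := by
  rw [ContinuousLinearMap.star_eq_adjoint, eq_comm, ContinuousLinearMap.eq_adjoint_iff]
  intro f g
  refine tsum_congr fun n => ?_
  rw [weightedDiag_apply, weightedDiag_apply, RCLike.real_smul_eq_coe_smul (K := ℂ),
    RCLike.real_smul_eq_coe_smul (K := ℂ) (c n) (X (g n)), inner_smul_left, inner_smul_right,
    RCLike.conj_ofReal, ContinuousLinearMap.star_eq_adjoint,
    ContinuousLinearMap.adjoint_inner_left]

theorem star_backwardShift_apply_zero (f : lp (fun _ : ℕ => H) 2) :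
    star (backwardShift (H := H)) f 0 = 0 := by
  refine ext_inner_left ℂ fun x => ?_
  have : backwardShift (lp.single 2 0 x : lp (fun _ : ℕ => H) 2) = 0 := by
    ext n; simp
  rw [← lp.inner_single_left (G := fun _ : ℕ => H), ContinuousLinearMap.star_eq_adjoint,
    ContinuousLinearMap.adjoint_inner_right, this, inner_zero_left, inner_zero_right]

theorem star_backwardShift_apply_succ (f : lp (fun _ : ℕ => H) 2) (n : ℕ) :
    star (backwardShift (H := H)) f (n + 1) = f n := by
  refine ext_inner_left ℂ fun x => ?_
  have : backwardShift (lp.single 2 (n + 1) x : lp (fun _ : ℕ => H) 2) = lp.single 2 n x := by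
    ext k; simp [Pi.single_apply]
  rw [← lp.inner_single_left (G := fun _ : ℕ => H), ContinuousLinearMap.star_eq_adjoint,
    ContinuousLinearMap.adjoint_inner_right, this, lp.inner_single_left (G := fun _ : ℕ => H)]

/-- The bidiagonal operator `(fₙ) ↦ (s ^ n T fₙ + √(1 - s ^ (2 (n + 1))) R fₙ₊₁)` is normal as soon
as `T* T - T T* = (1 - s²) R²` and `R T = s T R` with `R` self-adjoint. -/
theorem exists_isStarNormal_extension {s : ℝ} (hs0 : 0 ≤ s) (hs1 : s ≤ 1) {T R : H →L[ℂ] H}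
    (hR : star R = R) (hT : star T * T = T * star T + (1 - s ^ 2) • (R * R))
    (hRT : R * T = s • (T * R)) :
    ∃ N : lp (fun _ : ℕ => H) 2 →L[ℂ] lp (fun _ : ℕ => H) 2, IsStarNormal N ∧
      ∀ x, N (lp.single 2 0 x) = lp.single 2 0 (T x) := by
  have hpow : ∀ n, |s ^ n| ≤ 1 := fun n => by
    rw [abs_of_nonneg (by positivity)]; exact pow_le_one₀ hs0 hs1
  have hsub : ∀ n, 0 ≤ 1 - (s ^ 2) ^ (n + 1) := fun n =>
    sub_nonneg.2 (pow_le_one₀ (by positivity) (pow_le_one₀ hs0 hs1))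
  have hsqrt : ∀ n, |√(1 - (s ^ 2) ^ (n + 1))| ≤ 1 := fun n => by
    rw [abs_of_nonneg (Real.sqrt_nonneg _), Real.sqrt_le_one]
    linarith [show 0 ≤ (s ^ 2) ^ (n + 1) by positivity]
  have hTR : star T * R = s • (R * star T) := by simpa [hR] using congr_arg star hRT
  have hT' : ∀ x, star T (T x) = T (star T x) + (1 - s ^ 2) • R (R x) := fun x =>
    DFunLike.congr_fun hT x
  have hRT' : ∀ x, R (T x) = s • T (R x) := fun x => DFunLike.congr_fun hRT x
  have hTR' : ∀ x, star T (R x) = s • R (star T x) := fun x => DFunLike.congr_fun hTR x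
  refine ⟨weightedDiag _ hpow T + weightedDiag _ hsqrt R * backwardShift, ⟨?_⟩, fun x => ?_⟩
  · rw [star_add, star_mul, adjoint_weightedDiag, adjoint_weightedDiag, hR]
    refine ContinuousLinearMap.ext fun f => lp.ext (funext fun n => ?_)
    cases n with
    | zero =>
      simp [star_backwardShift_apply_zero, star_backwardShift_apply_succ, hT', hTR',
        ContinuousLinearMap.map_smul_of_tower, smul_smul]
      rw [Real.mul_self_sqrt (by simpa using hsub 0)]
      module
    | succ n =>
      simp [star_backwardShift_apply_succ, hT', hTR', hRT',
        ContinuousLinearMap.map_smul_of_tower, smul_smul]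
      rw [Real.mul_self_sqrt (hsub _), Real.mul_self_sqrt (hsub _)]
      module
  · ext n
    cases n <;> simp
end WeightedOperators

section BoundedCase

theorem ContinuousLinearMap.norm_sq_mul_one_sub_le {q : ℝ} (hq0 : 0 ≤ q) {T : H →L[ℂ] H}
    (hT : star T * T = 1 + q • (T * star T)) : ‖T‖ ^ 2 * (1 - q) ≤ 1 := by
  have h : ‖T‖ * ‖T‖ ≤ 1 + q * (‖T‖ * ‖T‖) := by
    rw [← CStarRing.norm_star_mul_self (x := T), hT]
    refine (norm_add_le _ _).trans (add_le_add ContinuousLinearMap.norm_id_le ?_)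
    rw [norm_smul, Real.norm_of_nonneg hq0, CStarRing.norm_self_mul_star, ← hT,
      CStarRing.norm_star_mul_self]
  nlinarith

/-- A bounded operator with `T* T = 1 + q T T*`, `0 ≤ q < 1`, has a bounded normal extension. -/
theorem exists_isStarNormal_extension_of_q_relation {q : ℝ} (hq0 : 0 ≤ q) (hq1 : q < 1)
    {T : H →L[ℂ] H} (hT : star T * T = 1 + q • (T * star T)) :
    ∃ N : lp (fun _ : ℕ => H) 2 →L[ℂ] lp (fun _ : ℕ => H) 2, IsStarNormal N ∧
      ∀ x, N (lp.single 2 0 x) = lp.single 2 0 (T x) := by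
  have hq : 0 < 1 - q := sub_pos.2 hq1
  obtain ⟨C, hC⟩ : ∃ C : H →L[ℂ] H, C = (1 - q)⁻¹ • (1 : H →L[ℂ] H) - T * star T := ⟨_, rfl⟩
  have hC0 : 0 ≤ C := by
    have h₁ : T * star T ≤ algebraMap ℝ (H →L[ℂ] H) ‖T * star T‖ :=
      IsSelfAdjoint.le_algebraMap_norm_self (IsSelfAdjoint.mul_star_self T)
    have h₂ : ‖T * star T‖ ≤ (1 - q)⁻¹ := by
      rw [CStarRing.norm_self_mul_star, ← pow_two, ← one_div, le_div_iff₀ hq]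
      exact ContinuousLinearMap.norm_sq_mul_one_sub_le hq0 hT
    rw [hC, sub_nonneg, ← Algebra.algebraMap_eq_smul_one]
    exact h₁.trans (algebraMap_mono _ h₂)
  have hCT : C * T = q • (T * C) := by
    rw [hC, sub_mul, mul_sub, mul_assoc, hT, mul_add]
    simp only [mul_smul_comm, smul_mul_assoc, mul_one, one_mul, smul_sub, smul_smul]
    have : (1 - q)⁻¹ - 1 = q * (1 - q)⁻¹ := by field_simp; ring
    rw [← this]
    module
  have hs2 : √q ^ 2 = q := Real.sq_sqrt hq0
  have hRR : CFC.sqrt C * CFC.sqrt C = C := CFC.sqrt_mul_sqrt_self C hC0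
  refine exists_isStarNormal_extension (Real.sqrt_nonneg q) (Real.sqrt_le_one.2 hq1.le)
    (IsSelfAdjoint.of_nonneg (CFC.sqrt_nonneg C)).star_eq ?_
    (mul_eq_smul_mul_of_sq (CFC.sqrt_nonneg C) (Real.sqrt_nonneg q) ?_)
  · rw [hRR, hs2, hC, hT, smul_sub, smul_smul, mul_inv_cancel₀ hq.ne']
    module
  · rw [hRR, hs2, hCT]

end BoundedCase

/-- A bounded normal operator is normal as an everywhere defined operator. -/
theorem IsStarNormal.isNormalPMap {K : Type*} [NormedAddCommGroup K] [InnerProductSpace ℂ K]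
    [CompleteSpace K] {N : K →L[ℂ] K} (hN : IsStarNormal N) :
    IsNormalPMap ((N : K →ₗ[ℂ] K).toPMap ⊤) := by
  have hadj := N.toPMap_adjoint_eq_adjoint_toPMap_of_dense (p := ⊤) (by simp)
  refine ⟨by simp, by rw [hadj]; rfl, fun f hf => ?_⟩
  have hval : ∀ h : f ∈ ((N : K →ₗ[ℂ] K).toPMap ⊤).adjoint.domain,
      ((N : K →ₗ[ℂ] K).toPMap ⊤).adjoint ⟨f, h⟩ = ContinuousLinearMap.adjoint N f := by
    rw [hadj]; intro h; rfl
  rw [hval]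
  exact ContinuousLinearMap.isStarNormal_iff_norm_eq_adjoint.1 hN f

/-- The embedding of `H` onto the zeroth summand of `ℓ²(ℕ, H)`. -/
def lpSingleZero : H →ₗᵢ[ℂ] lp (fun _ : ℕ => H) 2 where
  toLinearMap := lp.lsingle (E := fun _ : ℕ => H) 2 0
  norm_map' x := by simp

/-- A densely defined operator contained in a bounded operator that has a bounded normal extension
on `ℓ²(ℕ, H)` is subnormal. -/
theorem isSubnormalPMap_of_isStarNormal {S : H →ₗ.[ℂ] H} (hS : Dense (S.domain : Set H))
    {T : H →L[ℂ] H} (hT : ∀ f (hf : f ∈ S.domain), T f = S ⟨f, hf⟩)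
    {N : lp (fun _ : ℕ => H) 2 →L[ℂ] lp (fun _ : ℕ => H) 2} (hN : IsStarNormal N)
    (hNT : ∀ x, N (lp.single 2 0 x) = lp.single 2 0 (T x)) : IsSubnormalPMap.{u, u} S := by
  have hext : ExtendsVia lpSingleZero S
      ((N : lp (fun _ : ℕ => H) 2 →ₗ[ℂ] lp (fun _ : ℕ => H) 2).toPMap ⊤) := by
    intro f hf
    refine ⟨Submodule.mem_top, ?_⟩
    rw [← hT f hf]
    exact hNT f
  exact ⟨hS, ⟨⟨_, lpSingleZero, _, hN.isNormalPMap, hext⟩⟩⟩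

/-- A bounded densely defined operator extends to a continuous linear map. -/
theorem LinearPMap.exists_continuousLinearMap_of_bounded {S : H →ₗ.[ℂ] H}
    (hS : Dense (S.domain : Set H)) {M : ℝ}
    (hM : ∀ f (hf : f ∈ S.domain), ‖(S ⟨f, hf⟩ : H)‖ ≤ M * ‖f‖) :
    ∃ T : H →L[ℂ] H, ∀ f (hf : f ∈ S.domain), T f = S ⟨f, hf⟩ :=
  ⟨S.toFun.extendOfNorm S.domain.subtype, fun f hf =>
    LinearMap.extendOfNorm_eq (e := S.domain.subtype) hS.denseRange_val
      ⟨M, fun x => hM x x.2⟩ ⟨f, hf⟩⟩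

theorem LinearPMap.adjoint_apply_eq_of_continuousLinearMap {S : H →ₗ.[ℂ] H}
    (hS : Dense (S.domain : Set H)) {T : H →L[ℂ] H}
    (hT : ∀ f (hf : f ∈ S.domain), T f = S ⟨f, hf⟩) (f : S.adjoint.domain) :
    S.adjoint f = star T f :=
  LinearPMap.adjoint_apply_eq hS f fun x => by
    rw [ContinuousLinearMap.star_eq_adjoint, ContinuousLinearMap.adjoint_inner_left, hT x x.2]

/-- A bound on a core extends to the whole domain. -/
theorem IsCoreOf.norm_le {H : Type*} [NormedAddCommGroup H] [InnerProductSpace ℂ H]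
    {S : H →ₗ.[ℂ] H} {D : Submodule ℂ H} (hcore : IsCoreOf S D)
    (hS : S.IsClosable) {M : ℝ} (hM : ∀ f (hf : f ∈ D), ‖(S ⟨f, hcore.1 hf⟩ : H)‖ ≤ M * ‖f‖)
    (f : H) (hf : f ∈ S.domain) : ‖(S ⟨f, hf⟩ : H)‖ ≤ M * ‖f‖ := by
  have hle : S.domRestrict D ≤ S := LinearPMap.domRestrict_le
  have hmem : (f, S ⟨f, hf⟩) ∈ (S.domRestrict D).graph.topologicalClosure := by
    rw [(hS.leIsClosable hle).graph_closure_eq_closure_graph, hcore.2]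
    exact LinearPMap.le_graph_of_le S.le_closure (S.mem_graph ⟨f, hf⟩)
  have hclosed : IsClosed {p : H × H | ‖p.2‖ ≤ M * ‖p.1‖} :=
    isClosed_le (by fun_prop) (by fun_prop)
  refine closure_minimal ?_ hclosed hmem
  rintro ⟨x, y⟩ hxy
  obtain ⟨⟨z, hz⟩, rfl, rfl⟩ := (LinearPMap.mem_graph_iff _).1 hxy
  have hzD : z ∈ D := hz.1
  have : S.domRestrict D ⟨z, hz⟩ = S ⟨z, hcore.1 hzD⟩ := hle.2 rfl
  exact (congr_arg norm this).trans_le (hM z hzD)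

section Relation

variable {q : ℝ} {S : H →ₗ.[ℂ] H} {D : Submodule ℂ H}

/-- The relation on a subspace invariant under `S` and `S*`, without closures. -/
theorem SatOqD.adjoint_apply_apply (hS : SatOqD q S D) (hD : D ≤ S.domain)
    (hSD : ∀ f (hf : f ∈ D), (S ⟨f, hD hf⟩ : H) ∈ D)
    (hAD : ∀ f (hf : f ∈ D), (S.adjoint ⟨f, hS.memA f hf⟩ : H) ∈ D) (f : H) (hf : f ∈ D) :
    S.adjoint ⟨S ⟨f, hD hf⟩, hS.memA _ (hSD f hf)⟩ =
      f + (q : ℂ) • S ⟨S.adjoint ⟨f, hS.memA f hf⟩, hD (hAD f hf)⟩ := by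
  have h₁ : S.closure ⟨f, hS.memC f hf⟩ = S ⟨f, hD hf⟩ := (S.le_closure.2 rfl).symm
  have h₂ : S.closure ⟨S.adjoint ⟨f, hS.memA f hf⟩, hS.memAC f hf⟩ =
      S ⟨S.adjoint ⟨f, hS.memA f hf⟩, hD (hAD f hf)⟩ := (S.le_closure.2 rfl).symm
  have h := hS.eqn f hf
  rw [h₂, sub_eq_iff_eq_add] at h
  rw [← h]
  congr 2
  exact h₁.symm

theorem SatOqD.norm_sq_apply (hS : SatOqD q S D) (hD : D ≤ S.domain)
    (hSD : ∀ f (hf : f ∈ D), (S ⟨f, hD hf⟩ : H) ∈ D)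
    (hAD : ∀ f (hf : f ∈ D), (S.adjoint ⟨f, hS.memA f hf⟩ : H) ∈ D) (f : H) (hf : f ∈ D) :
    ‖S ⟨f, hD hf⟩‖ ^ 2 = ‖f‖ ^ 2 + q * ‖S.adjoint ⟨f, hS.memA f hf⟩‖ ^ 2 := by
  have hadj := LinearPMap.adjoint_isFormalAdjoint hS.denseDom
  have h₁ := hadj ⟨S ⟨f, hD hf⟩, hS.memA _ (hSD f hf)⟩ ⟨f, hD hf⟩
  have h₂ := hadj.symm ⟨S.adjoint ⟨f, hS.memA f hf⟩, hD (hAD f hf)⟩ ⟨f, hS.memA f hf⟩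
  rw [hS.adjoint_apply_apply hD hSD hAD f hf, inner_add_left, inner_smul_left] at h₁
  simp only [h₂, inner_self_eq_norm_sq_to_K, Complex.conj_ofReal] at h₁
  apply Complex.ofReal_injective
  push_cast
  exact h₁.symm

theorem SatOqD.star_mul_self_eq (hS : SatOqD q S D) (hD : D ≤ S.domain)
    (hSD : ∀ f (hf : f ∈ D), (S ⟨f, hD hf⟩ : H) ∈ D)
    (hAD : ∀ f (hf : f ∈ D), (S.adjoint ⟨f, hS.memA f hf⟩ : H) ∈ D) {T : H →L[ℂ] H}
    (hT : ∀ f (hf : f ∈ S.domain), T f = S ⟨f, hf⟩) :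
    star T * T = 1 + q • (T * star T) := by
  have hadj := LinearPMap.adjoint_apply_eq_of_continuousLinearMap hS.denseDom hT
  refine ContinuousLinearMap.ext_on (s := (D : Set H))
    (hS.denseD.mono Submodule.subset_span) fun f hf => ?_
  have h := hS.adjoint_apply_apply hD hSD hAD f hf
  simp only [hadj, ← hT] at h
  exact h

/-- A subnormal operator is hyponormal. -/
theorem NormalExtension.norm_adjoint_le (E : NormalExtension.{u, u} S)
    (hS : Dense (S.domain : Set H)) (f : H) (hf : f ∈ S.domain) (hfA : f ∈ S.adjoint.domain)
    (hfS : S.adjoint ⟨f, hfA⟩ ∈ S.domain) : ‖S.adjoint ⟨f, hfA⟩‖ ≤ ‖S ⟨f, hf⟩‖ := by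
  obtain ⟨K, ι, N, hN, hext⟩ := E
  obtain ⟨hf', hNf⟩ := hext f hf
  obtain ⟨hg', hNg⟩ := hext _ hfS
  set g := S.adjoint ⟨f, hfA⟩
  have h₁ : inner ℂ g g = inner ℂ f (S ⟨g, hfS⟩) :=
    LinearPMap.adjoint_isFormalAdjoint hS ⟨f, hfA⟩ ⟨g, hfS⟩
  have h₂ := LinearPMap.adjoint_isFormalAdjoint hN.dense ⟨ι f, hN.dom_eq ▸ hf'⟩ ⟨ι g, hg'⟩
  rw [hNg, ι.inner_map_map, ← h₁] at h₂
  have h₃ : ‖g‖ * ‖g‖ ≤ ‖S ⟨f, hf⟩‖ * ‖g‖ := by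
    rw [← inner_self_eq_norm_mul_norm (𝕜 := ℂ), ← h₂]
    refine (re_inner_le_norm _ _).trans_eq ?_
    rw [← hN.norm_eq _ hf', hNf, ι.norm_map, ι.norm_map]
  rcases (norm_nonneg g).eq_or_lt with h | h
  · rw [← h]; exact norm_nonneg _
  · exact le_of_mul_le_mul_right h₃ h

end Relation

/-- Let `0 ≤ q < 1` and let `S` satisfy `(O_{q,D})` on a dense subspace
`D` invariant under `S` and `S*` which is a core of `S`. The following are equivalent:
(i) `‖S f‖ ≤ (1-q)^{-1/2} ‖f‖` on `dom S`; (ii) `S` is bounded; (iii) `S` is subnormal;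
(iv) `‖S* f‖ ≤ ‖S f‖` on `D`. -/
theorem stmt14 (q : ℝ) (hq0 : 0 ≤ q) (hq1 : q < 1) (S : H →ₗ.[ℂ] H) (D : Submodule ℂ H)
    (hS : SatOqD q S D) (hD : D ≤ S.domain)
    (hSD : ∀ f (hf : f ∈ D), (S ⟨f, hD hf⟩ : H) ∈ D)
    (hAD : ∀ f (hf : f ∈ D), (S.adjoint ⟨f, hS.memA f hf⟩ : H) ∈ D)
    (hcore : IsCoreOf S D) :
    [∀ f (hf : f ∈ S.domain), ‖(S ⟨f, hf⟩ : H)‖ ≤ (Real.sqrt (1 - q))⁻¹ * ‖f‖,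
     ∃ M, 0 ≤ M ∧ ∀ f (hf : f ∈ S.domain), ‖(S ⟨f, hf⟩ : H)‖ ≤ M * ‖f‖,
     IsSubnormalPMap.{u, u} S,
     ∀ f (hf : f ∈ D), ‖(S.adjoint ⟨f, hS.memA f hf⟩ : H)‖ ≤ ‖(S ⟨f, hD hf⟩ : H)‖].TFAE := by
  have hq : 0 < 1 - q := sub_pos.2 hq1
  have hsq : 0 < √(1 - q) := Real.sqrt_pos.2 hq
  have le_of_sq : ∀ a b : ℝ, 0 ≤ b → a ^ 2 * (1 - q) ≤ b ^ 2 → a ≤ (√(1 - q))⁻¹ * b := by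
    intro a b hb hab
    rw [le_inv_mul_iff₀ hsq]
    refine le_of_sq_le_sq ?_ hb
    rwa [mul_pow, Real.sq_sqrt hq.le, mul_comm]
  tfae_have 1 → 2 := fun h => ⟨_, inv_nonneg.2 hsq.le, h⟩
  tfae_have 2 → 1 := by
    rintro ⟨M, -, hM⟩ f hf
    obtain ⟨T, hT⟩ := LinearPMap.exists_continuousLinearMap_of_bounded hS.denseDom hM
    rw [← hT f hf]
    refine (T.le_opNorm f).trans (mul_le_mul_of_nonneg_right ?_ (norm_nonneg f))
    simpa using le_of_sq ‖T‖ 1 zero_le_one (by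
      simpa using ContinuousLinearMap.norm_sq_mul_one_sub_le hq0
        (hS.star_mul_self_eq hD hSD hAD hT))
  tfae_have 2 → 3 := by
    rintro ⟨M, -, hM⟩
    obtain ⟨T, hT⟩ := LinearPMap.exists_continuousLinearMap_of_bounded hS.denseDom hM
    obtain ⟨N, hN, hNT⟩ := exists_isStarNormal_extension_of_q_relation hq0 hq1
      (hS.star_mul_self_eq hD hSD hAD hT)
    exact isSubnormalPMap_of_isStarNormal hS.denseDom hT hN hNT
  tfae_have 3 → 4 := by
    rintro ⟨hdense, ⟨E⟩⟩ f hf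
    exact E.norm_adjoint_le hdense f (hD hf) (hS.memA f hf) (hD (hAD f hf))
  tfae_have 4 → 1 := by
    intro h
    refine hcore.norm_le hS.closable fun f hf => le_of_sq _ _ (norm_nonneg f) ?_
    have h₁ := hS.norm_sq_apply hD hSD hAD f hf
    have h₂ := mul_le_mul_of_nonneg_left (pow_le_pow_left₀ (norm_nonneg _) (h f hf) 2) hq0
    linarith
  tfae_finish
end
end

section
/- Let q > 0, let H be a complex Hilbert space with orthonormal basis (e_n)_{n∈ℕ}, and let S be the closure of the weighted shift defined on span{e_n : n ∈ ℕ} by e_n ↦ √([n+1]_q) e_{n+1}. Then S is subnormal and admits a normal extension which is both tight and *-tight; in particular dom S = dom S*. -/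
noncomputable section

universe u v

variable {H : Type u} [NormedAddCommGroup H] [InnerProductSpace ℂ H] [CompleteSpace H]

/-- The `q`-number `[n]_q`. -/
def qNum (q : ℝ) (n : ℕ) : ℝ := if q = 1 then (n : ℝ) else (1 - q ^ n) / (1 - q)

attribute [instance] NormalExtension.nK NormalExtension.iK NormalExtension.cK

/-- The extension is *tight* if `dom N̄ ∩ H = dom Ā`. -/
def NormalExtension.Tight {A : H →ₗ.[ℂ] H} (E : NormalExtension A) : Prop :=
  A.IsClosable ∧ E.N.IsClosable ∧
    ∀ f : H, E.ι f ∈ E.N.closure.domain ↔ f ∈ A.closure.domain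

/-- The extension is *`*`-tight* if `dom N* ∩ H = dom A*`. -/
def NormalExtension.StarTight {A : H →ₗ.[ℂ] H} (E : NormalExtension A) : Prop :=
  ∀ f : H, E.ι f ∈ E.N.adjoint.domain ↔ f ∈ A.adjoint.domain


section MulOp

open MeasureTheory ComplexConjugate

variable {X : Type*} [MeasurableSpace X]

/-- The maximal operator of multiplication by `φ` in `L²(μ)`. -/
def mulOp (μ : Measure X) (φ : X → ℂ) : Lp ℂ 2 μ →ₗ.[ℂ] Lp ℂ 2 μ where
  domain :=
    { carrier := {f | MemLp (fun x => φ x * f x) 2 μ}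
      zero_mem' := by
        refine (MemLp.zero (ε := ℂ)).ae_eq ?_
        filter_upwards [Lp.coeFn_zero ℂ 2 μ] with x hx
        rw [hx]
        simp
      add_mem' := by
        intro f g hf hg
        refine (MemLp.add hf hg).ae_eq ?_
        filter_upwards [Lp.coeFn_add f g] with x hx
        rw [hx]
        simp [mul_add]
      smul_mem' := by
        intro c f hf
        refine (MemLp.const_smul hf c).ae_eq ?_
        filter_upwards [Lp.coeFn_smul c f] with x hx
        rw [hx]
        simp [mul_left_comm] }
  toFun :=
    { toFun := fun f => MemLp.toLp _ f.2
      map_add' := by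
        intro f g
        ext1
        filter_upwards [MemLp.coeFn_toLp (f + g).2, MemLp.coeFn_toLp f.2, MemLp.coeFn_toLp g.2,
          Lp.coeFn_add (MemLp.toLp _ f.2) (MemLp.toLp _ g.2),
          Lp.coeFn_add (f : Lp ℂ 2 μ) g] with x h1 h2 h3 h4 h5
        simp only [Pi.add_apply] at h4 h5
        rw [h1, h4, h2, h3, Submodule.coe_add, h5, mul_add]
      map_smul' := by
        intro c f
        ext1
        filter_upwards [MemLp.coeFn_toLp (c • f).2, MemLp.coeFn_toLp f.2,
          Lp.coeFn_smul c (MemLp.toLp _ f.2), Lp.coeFn_smul c (f : Lp ℂ 2 μ)] with x h1 h2 h3 h4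
        simp only [Pi.smul_apply, smul_eq_mul] at h3 h4
        rw [h1, RingHom.id_apply, h3, h2, Submodule.coe_smul, h4, mul_left_comm] }

variable {μ : Measure X} {φ : X → ℂ}

theorem mem_mulOp_domain {f : Lp ℂ 2 μ} :
    f ∈ (mulOp μ φ).domain ↔ MemLp (fun x => φ x * f x) 2 μ := Iff.rfl

theorem mulOp_coeFn (f : (mulOp μ φ).domain) :
    mulOp μ φ f =ᵐ[μ] fun x => φ x * (f : Lp ℂ 2 μ) x := MemLp.coeFn_toLp f.2

theorem mem_mulOp_conj_domain (hφ : Measurable φ) {f : Lp ℂ 2 μ} :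
    f ∈ (mulOp μ fun x => conj (φ x)).domain ↔ f ∈ (mulOp μ φ).domain := by
  rw [mem_mulOp_domain, mem_mulOp_domain]
  have hf := (Lp.memLp f).1
  refine memLp_congr_norm (AEStronglyMeasurable.mul ?_ hf)
    (hφ.aestronglyMeasurable.mul hf) (.of_forall fun x => by simp)
  exact (Complex.continuous_conj.measurable.comp hφ).aestronglyMeasurable

/-- The set on which `φ` is bounded by `n`. -/
def boundedSet (φ : X → ℂ) (n : ℕ) : Set X := {x | ‖φ x‖ ≤ n}

theorem measurableSet_boundedSet (hφ : Measurable φ) (n : ℕ) :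
    MeasurableSet (boundedSet φ n) :=
  measurableSet_le hφ.norm measurable_const

/-- The truncation of `f` to `boundedSet φ n`. -/
def truncLp (hφ : Measurable φ) (n : ℕ) (f : Lp ℂ 2 μ) : Lp ℂ 2 μ :=
  ((Lp.memLp f).indicator (measurableSet_boundedSet hφ n)).toLp _

theorem truncLp_coeFn (hφ : Measurable φ) (n : ℕ) (f : Lp ℂ 2 μ) :
    truncLp hφ n f =ᵐ[μ] (boundedSet φ n).indicator f := MemLp.coeFn_toLp _

theorem truncLp_mem (hφ : Measurable φ) (n : ℕ) (f : Lp ℂ 2 μ) :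
    truncLp hφ n f ∈ (mulOp μ φ).domain := by
  rw [mem_mulOp_domain]
  refine (Lp.memLp f).of_le_mul (c := n) (hφ.aestronglyMeasurable.mul (Lp.memLp _).1) ?_
  filter_upwards [truncLp_coeFn hφ n f] with x hx
  rw [hx, norm_mul]
  by_cases h : x ∈ boundedSet φ n
  · rw [Set.indicator_of_mem h]
    exact mul_le_mul_of_nonneg_right h (norm_nonneg _)
  · rw [Set.indicator_of_notMem h]
    simp only [norm_zero, mul_zero]
    positivity

theorem mulOp_conj_inner (f : (mulOp μ fun x => conj (φ x)).domain) (g : (mulOp μ φ).domain) :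
    inner ℂ (mulOp μ (fun x => conj (φ x)) f) (g : Lp ℂ 2 μ)
      = inner ℂ (f : Lp ℂ 2 μ) (mulOp μ φ g) := by
  rw [L2.inner_def, L2.inner_def]
  refine integral_congr_ae ?_
  filter_upwards [mulOp_coeFn f, mulOp_coeFn g] with x h1 h2
  rw [h1, h2]
  simp only [RCLike.inner_apply, map_mul, Complex.conj_conj]
  ring

theorem truncLp_inner (hφ : Measurable φ) (n : ℕ) (f g : Lp ℂ 2 μ) :
    inner ℂ (truncLp hφ n f) g = inner ℂ f (truncLp hφ n g) := by
  rw [L2.inner_def, L2.inner_def]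
  refine integral_congr_ae ?_
  filter_upwards [truncLp_coeFn hφ n f, truncLp_coeFn hφ n g] with x h1 h2
  rw [h1, h2]
  by_cases h : x ∈ boundedSet φ n <;> simp [h]

theorem ae_eq_of_boundedSet {u v : X → ℂ}
    (h : ∀ n, (boundedSet φ n).indicator u =ᵐ[μ] (boundedSet φ n).indicator v) : u =ᵐ[μ] v := by
  filter_upwards [ae_all_iff.2 h] with x hx
  obtain ⟨n, hn⟩ := exists_nat_ge ‖φ x‖
  have hmem : x ∈ boundedSet φ n := hn
  simpa [hmem] using hx n

theorem mulOp_dense (hφ : Measurable φ) : Dense ((mulOp μ φ).domain : Set (Lp ℂ 2 μ)) := by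
  rw [← Submodule.dense_iff_topologicalClosure_eq_top.symm,
    Submodule.topologicalClosure_eq_top_iff, Submodule.eq_bot_iff]
  intro g hg
  have key : ∀ n, truncLp hφ n g = 0 := by
    intro n
    rw [← inner_self_eq_zero (𝕜 := ℂ), ← truncLp_inner]
    exact (Submodule.mem_orthogonal _ _).1 hg _ (truncLp_mem hφ n _)
  rw [Lp.eq_zero_iff_ae_eq_zero]
  refine ae_eq_of_boundedSet (φ := φ) fun n => ?_
  have h0 := Lp.coeFn_zero ℂ 2 μ
  rw [← key n] at h0
  refine (truncLp_coeFn hφ n g).symm.trans (h0.trans ?_)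
  simp

theorem mulOp_adjoint (hφ : Measurable φ) :
    (mulOp μ φ).adjoint = mulOp μ fun x => conj (φ x) := by
  have hle : (mulOp μ fun x => conj (φ x)) ≤ (mulOp μ φ).adjoint :=
    LinearPMap.IsFormalAdjoint.le_adjoint (mulOp_dense hφ)
      (LinearPMap.IsFormalAdjoint.symm mulOp_conj_inner)
  refine (LinearPMap.eq_of_le_of_domain_eq hle (le_antisymm hle.1 ?_)).symm
  intro g hg
  set h := (mulOp μ φ).adjoint ⟨g, hg⟩
  have key : ∀ n, truncLp hφ n h = mulOp μ (fun x => conj (φ x))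
      ⟨truncLp hφ n g, (mem_mulOp_conj_domain hφ).2 (truncLp_mem hφ n g)⟩ := by
    intro n
    refine ext_inner_right ℂ fun f => ?_
    rw [truncLp_inner]
    have h1 := LinearPMap.adjoint_isFormalAdjoint (mulOp_dense hφ) ⟨g, hg⟩
      ⟨truncLp hφ n f, truncLp_mem hφ n f⟩
    refine h1.trans ?_
    rw [L2.inner_def, L2.inner_def]
    refine integral_congr_ae ?_
    filter_upwards [mulOp_coeFn (φ := φ) (μ := μ) ⟨truncLp hφ n f, truncLp_mem hφ n f⟩,
      mulOp_coeFn (μ := μ) (φ := fun x => conj (φ x))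
        ⟨truncLp hφ n g, (mem_mulOp_conj_domain hφ).2 (truncLp_mem hφ n g)⟩,
      truncLp_coeFn hφ n f, truncLp_coeFn hφ n g] with x h1 h2 h3 h4
    rw [h1, h2]
    simp only [h3, h4]
    by_cases hx : x ∈ boundedSet φ n
    · simp [hx]; ring
    · simp [hx]
  have hae : (h : X → ℂ) =ᵐ[μ] fun x => conj (φ x) * g x := by
    refine ae_eq_of_boundedSet (φ := φ) fun n => ?_
    refine (truncLp_coeFn hφ n h).symm.trans ?_
    rw [key n]
    filter_upwards [mulOp_coeFn (μ := μ) (φ := fun x => conj (φ x))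
        ⟨truncLp hφ n g, (mem_mulOp_conj_domain hφ).2 (truncLp_mem hφ n g)⟩,
        truncLp_coeFn hφ n g] with x h1 h2
    rw [h1]
    simp only [h2]
    by_cases hx : x ∈ boundedSet φ n <;> simp [hx]
  exact (Lp.memLp h).ae_eq hae

theorem mulOp_isClosed (hφ : Measurable φ) : (mulOp μ φ).IsClosed := by
  have hφ' : Measurable fun x => conj (φ x) := Complex.continuous_conj.measurable.comp hφ
  have h := LinearPMap.adjoint_isClosed (mulOp_dense (μ := μ) hφ')
  rw [mulOp_adjoint hφ'] at h
  simpa using h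

theorem norm_mulOp_adjoint (hφ : Measurable φ) {f : Lp ℂ 2 μ} (hf : f ∈ (mulOp μ φ).domain)
    (hf' : f ∈ (mulOp μ φ).adjoint.domain) :
    ‖mulOp μ φ ⟨f, hf⟩‖ = ‖(mulOp μ φ).adjoint ⟨f, hf'⟩‖ := by
  have hc : f ∈ (mulOp μ fun x => conj (φ x)).domain := (mem_mulOp_conj_domain hφ).2 hf
  have hadj : (mulOp μ φ).adjoint ⟨f, hf'⟩ = mulOp μ (fun x => conj (φ x)) ⟨f, hc⟩ :=
    LinearPMap.adjoint_apply_eq (mulOp_dense hφ) _ fun x => mulOp_conj_inner ⟨f, hc⟩ x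
  rw [hadj, Lp.norm_def, Lp.norm_def]
  congr 1
  refine eLpNorm_congr_norm_ae ?_
  filter_upwards [mulOp_coeFn ⟨f, hf⟩, mulOp_coeFn ⟨f, hc⟩] with x h1 h2
  rw [h1, h2]
  simp

theorem mulOp_isNormal (hφ : Measurable φ) : IsNormalPMap (mulOp μ φ) where
  dense := mulOp_dense hφ
  dom_eq := by
    rw [mulOp_adjoint hφ]
    ext f
    exact (mem_mulOp_conj_domain hφ).symm
  norm_eq := fun _ hf => norm_mulOp_adjoint hφ hf _

end MulOp

theorem LinearPMap.IsClosed.closure_eq {E : Type*} [NormedAddCommGroup E] [InnerProductSpace ℂ E]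
    {T : E →ₗ.[ℂ] E} (hT : T.IsClosed) : T.closure = T := by
  refine LinearPMap.eq_of_eq_graph ?_
  rw [← hT.isClosable.graph_closure_eq_closure_graph]
  exact hT.submodule_topologicalClosure_eq

section WeightedShift

variable {e : HilbertBasis ℕ ℂ H} {S₀ : H →ₗ.[ℂ] H} {a : ℕ → ℝ}

theorem mk_mem_graph_of_shift {H : Type*} [NormedAddCommGroup H] [InnerProductSpace ℂ H]
    {e : HilbertBasis ℕ ℂ H} {S₀ : H →ₗ.[ℂ] H}
    (hdom : S₀.domain = Submodule.span ℂ (Set.range (e : ℕ → H)))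
    (hval : ∀ (n : ℕ) (hn : e n ∈ S₀.domain), S₀ ⟨e n, hn⟩ = (a n : ℂ) • e (n + 1)) (n : ℕ) :
    (e n, (a n : ℂ) • e (n + 1)) ∈ S₀.graph := by
  have hn : e n ∈ S₀.domain := hdom ▸ Submodule.subset_span ⟨n, rfl⟩
  exact (LinearPMap.mem_graph_iff S₀).2 ⟨⟨e n, hn⟩, rfl, hval n hn⟩

/-- A closed operator that extends a weighted shift on the basis vectors extends
the closure of its graph. -/
theorem topologicalClosure_graph_le_comap {H : Type*} [NormedAddCommGroup H] [InnerProductSpace ℂ H]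
    {K : Type*} [NormedAddCommGroup K] [InnerProductSpace ℂ K] {e : HilbertBasis ℕ ℂ H}
    {S₀ : H →ₗ.[ℂ] H} {ι : H →ₗᵢ[ℂ] K} {N : K →ₗ.[ℂ] K}
    (hdom : S₀.domain = Submodule.span ℂ (Set.range (e : ℕ → H)))
    (hval : ∀ (n : ℕ) (hn : e n ∈ S₀.domain), S₀ ⟨e n, hn⟩ = (a n : ℂ) • e (n + 1))
    (hN : N.IsClosed) (hNe : ∀ n, (ι (e n), (a n : ℂ) • ι (e (n + 1))) ∈ N.graph) :
    S₀.graph.topologicalClosure ≤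
      N.graph.comap (ι.toLinearMap.prodMap ι.toLinearMap) := by
  refine Submodule.topologicalClosure_minimal _ ?_ ?_
  · have key : ∀ x ∈ Submodule.span ℂ (Set.range (e : ℕ → H)), ∀ hx : x ∈ S₀.domain,
        (ι x, ι (S₀ ⟨x, hx⟩)) ∈ N.graph := by
      intro x hx
      induction hx using Submodule.span_induction with
      | mem x h =>
        obtain ⟨n, rfl⟩ := h
        intro hx
        rw [hval, map_smul]
        exact hNe n
      | zero =>
        intro hx
        have h0 : S₀ ⟨0, hx⟩ = 0 := S₀.map_zero
        simp [h0]
      | add x y hx hy ihx ihy =>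
        intro hxy
        rw [← hdom] at hx hy
        have h : S₀ ⟨x + y, hxy⟩ = S₀ ⟨x, hx⟩ + S₀ ⟨y, hy⟩ := S₀.map_add ⟨x, hx⟩ ⟨y, hy⟩
        rw [h, map_add, map_add]
        exact N.graph.add_mem (ihx hx) (ihy hy)
      | smul c x hx ih =>
        intro hcx
        rw [← hdom] at hx
        have h : S₀ ⟨c • x, hcx⟩ = c • S₀ ⟨x, hx⟩ := S₀.map_smul c ⟨x, hx⟩
        rw [h, map_smul, map_smul]
        exact N.graph.smul_mem c (ih hx)
    rintro ⟨x, y⟩ hxy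
    obtain ⟨⟨x', hx'⟩, h1, h2⟩ := (LinearPMap.mem_graph_iff S₀).1 hxy
    simp only at h1 h2
    subst h1 h2
    exact key x' (hdom ▸ hx') hx'
  · exact hN.preimage ((ι.continuous.comp continuous_fst).prodMk (ι.continuous.comp continuous_snd))

/-- If the squared weights grow at most geometrically, then the adjoint of the closure of a weighted
shift has no larger domain than the closure. -/
theorem adjoint_domain_le_of_shift
    (hdom : S₀.domain = Submodule.span ℂ (Set.range (e : ℕ → H)))
    (hval : ∀ (n : ℕ) (hn : e n ∈ S₀.domain), S₀ ⟨e n, hn⟩ = (a n : ℂ) • e (n + 1))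
    {C : ℝ} (ha : ∀ n, a (n + 1) ^ 2 ≤ 1 + C * a n ^ 2) (hcl : S₀.IsClosable)
    (hdense : Dense (S₀.closure.domain : Set H)) :
    S₀.closure.adjoint.domain ≤ S₀.closure.domain := by
  intro f hf
  have hsq : Summable fun n => a n ^ 2 * ‖inner ℂ (e (n + 1)) f‖ ^ 2 := by
    have hb := e.orthonormal.inner_products_summable (S₀.closure.adjoint ⟨f, hf⟩)
    refine hb.congr fun n => ?_
    obtain ⟨x, hx1, hx2⟩ := (LinearPMap.mem_graph_iff _).1
      (LinearPMap.le_graph_of_le S₀.le_closure (mk_mem_graph_of_shift hdom hval n))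
    have h := LinearPMap.adjoint_isFormalAdjoint hdense ⟨f, hf⟩ x
    rw [hx1, hx2, inner_smul_right] at h
    rw [norm_inner_symm, h, norm_mul, norm_inner_symm, mul_pow]
    simp
  have hf2 : Summable fun n => ‖inner ℂ (e n) f‖ ^ 2 := e.orthonormal.inner_products_summable f
  have hsum : Summable fun n => ‖(a n : ℂ) * inner ℂ (e n) f‖ ^ 2 := by
    rw [← summable_nat_add_iff 1]
    refine Summable.of_nonneg_of_le (fun n => by positivity) (fun n => ?_)
      (((summable_nat_add_iff 1).2 hf2).add (hsq.mul_left C))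
    rw [norm_mul, mul_pow, Complex.norm_real, Real.norm_eq_abs, sq_abs]
    nlinarith [mul_le_mul_of_nonneg_right (ha n) (sq_nonneg ‖inner ℂ (e (n + 1)) f‖)]
  have horth : Orthonormal ℂ fun n => e (n + 1) := e.orthonormal.comp _ (add_left_injective 1)
  have hg := (horth.orthogonalFamily.summable_iff_norm_sq_summable
    fun n => (a n : ℂ) * inner ℂ (e n) f).2 hsum
  have hfs := e.hasSum_repr f
  have hpair := hfs.prodMk hg.hasSum
  have hmem := (hcl.closure_isClosed).mem_of_tendsto hpair (.of_forall fun s => ?_)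
  · exact LinearPMap.mem_domain_of_mem_graph hmem
  · refine Submodule.sum_mem _ fun n _ => ?_
    have := S₀.closure.graph.smul_mem (inner ℂ (e n) f)
      (LinearPMap.le_graph_of_le S₀.le_closure (mk_mem_graph_of_shift hdom hval n))
    convert! this using 1
    rw [Prod.smul_mk, e.repr_apply_apply, LinearIsometry.toSpanSingleton_apply, smul_smul,
      mul_comm]

/-- A weighted shift which has a closed normal extension, and whose squared weights grow at most
geometrically, has the same domain as its adjoint, and the extension is tight and `*`-tight. -/
theorem exists_tight_of_shift {K : Type v} [NormedAddCommGroup K] [InnerProductSpace ℂ K]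
    [CompleteSpace K] {ι : H →ₗᵢ[ℂ] K} {N : K →ₗ.[ℂ] K}
    (hdom : S₀.domain = Submodule.span ℂ (Set.range (e : ℕ → H)))
    (hval : ∀ (n : ℕ) (hn : e n ∈ S₀.domain), S₀ ⟨e n, hn⟩ = (a n : ℂ) • e (n + 1))
    {C : ℝ} (ha : ∀ n, a (n + 1) ^ 2 ≤ 1 + C * a n ^ 2)
    (hN : N.IsClosed) (hnorm : IsNormalPMap N)
    (hNe : ∀ n, (ι (e n), (a n : ℂ) • ι (e (n + 1))) ∈ N.graph) :
    (∃ E : NormalExtension.{u, v} S₀.closure, E.Tight ∧ E.StarTight) ∧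
      S₀.closure.domain = S₀.closure.adjoint.domain := by
  have hle := topologicalClosure_graph_le_comap hdom hval hN hNe
  have hcl : S₀.IsClosable := by
    refine ⟨S₀.graph.topologicalClosure.toLinearPMap,
      (Submodule.toLinearPMap_graph_eq _ fun x hx hx0 => ?_).symm⟩
    have h := N.graph_fst_eq_zero_snd (hle hx) (by simp [hx0])
    exact ι.injective (h.trans (map_zero ι).symm)
  have hdense₀ : Dense (S₀.domain : Set H) := by
    rw [hdom, Submodule.dense_iff_topologicalClosure_eq_top]
    exact e.dense_span
  have hdense : Dense (S₀.closure.domain : Set H) := hdense₀.mono S₀.le_closure.1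
  have hext : ExtendsVia ι S₀.closure N := by
    intro f hf
    have h : (f, S₀.closure ⟨f, hf⟩) ∈ S₀.graph.topologicalClosure := by
      rw [hcl.graph_closure_eq_closure_graph]
      exact S₀.closure.mem_graph ⟨f, hf⟩
    obtain ⟨y, hy1, hy2⟩ := (LinearPMap.mem_graph_iff _).1 (hle h)
    have hy1 : (y : K) = ι f := hy1
    refine ⟨hy1 ▸ y.2, ?_⟩
    refine Eq.trans ?_ hy2
    congr 1
    exact Subtype.ext hy1.symm
  have hadj : S₀.closure.adjoint.domain ≤ S₀.closure.domain :=
    adjoint_domain_le_of_shift hdom hval ha hcl hdense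
  have hstar : ∀ f, ι f ∈ N.adjoint.domain → f ∈ S₀.closure.adjoint.domain := by
    intro f hf
    refine LinearPMap.mem_adjoint_domain_of_exists _
      ⟨ι.toContinuousLinearMap.adjoint (N.adjoint ⟨ι f, hf⟩), fun x => ?_⟩
    obtain ⟨hB, hx⟩ := hext x x.2
    rw [ContinuousLinearMap.adjoint_inner_left]
    refine (LinearPMap.adjoint_isFormalAdjoint hnorm.dense ⟨ι f, hf⟩ ⟨ι x, hB⟩).trans ?_
    rw [hx]
    exact ι.inner_map_map _ _
  have hsub : ∀ f, f ∈ S₀.closure.domain → ι f ∈ N.domain := fun f hf => (hext f hf).1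
  refine ⟨⟨⟨K, ι, N, hnorm, hext⟩, ⟨hcl.closureIsClosable, hN.isClosable, fun f => ?_⟩,
    fun f => ⟨hstar f, fun hf => ?_⟩⟩, le_antisymm (fun f hf => hstar f ?_) hadj⟩
  · simp only [hN.closure_eq, hcl.closure_isClosed.closure_eq]
    exact ⟨fun hf => hadj (hstar f (hnorm.dom_eq ▸ hf)), hsub f⟩
  · exact hnorm.dom_eq ▸ hsub f (hadj hf)
  · exact hnorm.dom_eq ▸ hsub f hf

end WeightedShift

section Moments

open MeasureTheory ComplexConjugate

/-- If `μ` is a measure for which the powers of `φ` are orthogonal with squared norms `c n`, then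
`φ` acts on the normalized powers as the weighted shift with weights `√(c (n + 1) / c n)`. -/
theorem exists_isometry_of_moments {H : Type*} [NormedAddCommGroup H] [InnerProductSpace ℂ H]
    {X : Type*} [MeasurableSpace X] {μ : Measure X} {φ : X → ℂ}
    (e : HilbertBasis ℕ ℂ H) {a c : ℕ → ℝ} (ha : ∀ n, 0 < a n) (hc : ∀ n, 0 < c n)
    (hac : ∀ n, c (n + 1) = a n ^ 2 * c n) (hint : ∀ n, MemLp (fun x => φ x ^ n) 2 μ)
    (hmom : ∀ m n, ∫ x, conj (φ x ^ m) * φ x ^ n ∂μ = if m = n then (c n : ℂ) else 0) :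
    ∃ ι : H →ₗᵢ[ℂ] Lp ℂ 2 μ,
      ∀ n, (ι (e n), (a n : ℂ) • ι (e (n + 1))) ∈ (mulOp μ φ).graph := by
  classical
  have hinner : ∀ m n, inner ℂ ((hint m).toLp _) ((hint n).toLp _)
      = if m = n then (c n : ℂ) else 0 := by
    intro m n
    rw [← hmom, L2.inner_def]
    refine integral_congr_ae ?_
    filter_upwards [(hint m).coeFn_toLp, (hint n).coeFn_toLp] with x h1 h2
    rw [h1, h2, RCLike.inner_apply, mul_comm]
  have horth : Orthonormal ℂ fun n => ((Real.sqrt (c n))⁻¹ : ℂ) • (hint n).toLp _ := by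
    rw [orthonormal_iff_ite]
    intro m n
    rw [inner_smul_left, inner_smul_right, hinner]
    split_ifs with h
    · subst h
      have h0 : (Real.sqrt (c m) : ℂ) ≠ 0 := by
        exact_mod_cast (Real.sqrt_pos.2 (hc m)).ne'
      have h1 : (c m : ℂ) = Real.sqrt (c m) * Real.sqrt (c m) := by
        exact_mod_cast (Real.mul_self_sqrt (hc m).le).symm
      rw [map_inv₀, Complex.conj_ofReal]
      nth_rewrite 1 [h1]
      field_simp
    · simp
  refine ⟨horth.orthogonalFamily.linearIsometry.comp e.repr.toLinearIsometry, fun n => ?_⟩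
  have hι : ∀ n, (horth.orthogonalFamily.linearIsometry.comp e.repr.toLinearIsometry) (e n)
      = ((Real.sqrt (c n))⁻¹ : ℂ) • (hint n).toLp _ := by
    intro n
    change horth.orthogonalFamily.linearIsometry (e.repr (e n)) = _
    rw [e.repr_self]
    refine (horth.orthogonalFamily.linearIsometry_apply_single _).trans ?_
    exact (LinearIsometry.toSpanSingleton_apply _ _).trans (one_smul _ _)
  have hmul : ((hint n).toLp (fun x => φ x ^ n), (hint (n + 1)).toLp (fun x => φ x ^ (n + 1)))
      ∈ (mulOp μ φ).graph := by
    have hae : (fun x => φ x ^ (n + 1)) =ᵐ[μ] fun x => φ x * (hint n).toLp _ x := by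
      filter_upwards [(hint n).coeFn_toLp] with x hx
      rw [hx, pow_succ']
    refine (LinearPMap.mem_graph_iff _).2 ⟨⟨_, (hint (n + 1)).ae_eq hae⟩, rfl, ?_⟩
    exact (MemLp.toLp_eq_toLp_iff ((hint (n + 1)).ae_eq hae) (hint (n + 1))).2 hae.symm
  rw [hι, hι, smul_smul]
  have hcoef : (a n : ℂ) * ((Real.sqrt (c (n + 1)))⁻¹ : ℂ) = ((Real.sqrt (c n))⁻¹ : ℂ) := by
    rw [hac, Real.sqrt_mul (sq_nonneg _), Real.sqrt_sq (ha n).le]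
    have h0 : (a n : ℂ) ≠ 0 := by exact_mod_cast (ha n).ne'
    push_cast
    rw [mul_inv, ← mul_assoc, mul_inv_cancel₀ h0, one_mul]
  rw [hcoef]
  exact (mulOp μ φ).graph.smul_mem _ hmul

theorem integral_fourier_eq (n : ℤ) :
    ∫ z : UnitAddCircle, fourier n z ∂AddCircle.haarAddCircle = if n = 0 then 1 else 0 := by
  split_ifs with h
  · simp [h]
  · exact integral_eq_zero_of_add_right_eq_neg (fourier_add_half_inv_index h one_pos)

/-- A Stieltjes moment sequence is the sequence of squared norms of the powers of a function
whose powers are orthogonal. -/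
theorem exists_orthogonal_powers {ν : Measure ℝ} [SFinite ν] {c : ℕ → ℝ}
    (hν : ∀ᵐ t ∂ν, 0 ≤ t) (hc : ∀ n, 0 ≤ c n)
    (hmom : ∀ n : ℕ, ∫⁻ t, ENNReal.ofReal (t ^ n) ∂ν = ENNReal.ofReal (c n)) :
    ∃ (X : Type u) (_ : MeasurableSpace X) (μ : Measure X) (φ : X → ℂ), Measurable φ ∧
      (∀ n, MemLp (fun x => φ x ^ n) 2 μ) ∧
      ∀ m n, ∫ x, conj (φ x ^ m) * φ x ^ n ∂μ = if m = n then (c n : ℂ) else 0 := by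
  have hnn : ∀ n : ℕ, 0 ≤ᵐ[ν] fun t => t ^ n := fun n => by
    filter_upwards [hν] with t ht using pow_nonneg ht n
  have hint : ∀ n : ℕ, Integrable (fun t : ℝ => t ^ n) ν := fun n => by
    refine ⟨by fun_prop, ?_⟩
    rw [hasFiniteIntegral_iff_ofReal (hnn n), hmom]
    exact ENNReal.ofReal_lt_top
  have hval : ∀ n : ℕ, ∫ t, t ^ n ∂ν = c n := fun n => by
    rw [integral_eq_lintegral_of_nonneg_ae (hnn n) (by fun_prop), hmom, ENNReal.toReal_ofReal (hc n)]
  let μ₀ : Measure (UnitAddCircle × ℝ) := (AddCircle.haarAddCircle (T := (1 : ℝ))).prod ν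
  let φ₀ : UnitAddCircle × ℝ → ℂ := fun p => fourier 1 p.1 * (Real.sqrt p.2 : ℂ)
  have hφ₀ : Measurable φ₀ := by
    have h1 : Measurable fun z : UnitAddCircle => fourier 1 z := (fourier 1).continuous.measurable
    exact (h1.comp measurable_fst).mul
      (Complex.measurable_ofReal.comp (Real.continuous_sqrt.measurable.comp measurable_snd))
  have hνμ : ∀ᵐ p ∂μ₀, 0 ≤ p.2 := Measure.quasiMeasurePreserving_snd.ae hν
  have hint₀ : ∀ n, MemLp (fun x => φ₀ x ^ n) 2 μ₀ := by
    intro n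
    rw [memLp_two_iff_integrable_sq_norm (hφ₀.pow_const n).aestronglyMeasurable]
    refine ((hint n).comp_snd _).congr ?_
    filter_upwards [hνμ] with p hp
    have h1 : ‖fourier 1 p.1‖ = 1 := by simp [fourier_apply, Circle.norm_coe]
    rw [norm_pow, norm_mul, h1, one_mul, Complex.norm_real, Real.norm_eq_abs,
      abs_of_nonneg (Real.sqrt_nonneg _), ← pow_mul, mul_comm, pow_mul, Real.sq_sqrt hp]
  have hmom₀ : ∀ m n, ∫ x, conj (φ₀ x ^ m) * φ₀ x ^ n ∂μ₀ = if m = n then (c n : ℂ) else 0 := by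
    intro m n
    have hsplit : ∀ p : UnitAddCircle × ℝ, conj (φ₀ p ^ m) * φ₀ p ^ n
        = fourier ((n : ℤ) - m) p.1 * ((Real.sqrt p.2 ^ (m + n) : ℝ) : ℂ) := by
      intro p
      have h1 : ∀ k : ℕ, fourier 1 p.1 ^ k = fourier (k : ℤ) p.1 := by
        intro k
        induction k with
        | zero => simp
        | succ k ih => rw [pow_succ, ih, ← fourier_add]; push_cast; rfl
      have h2 : fourier ((n : ℤ) - m) p.1 = conj (fourier (m : ℤ) p.1) * fourier (n : ℤ) p.1 := by
        rw [← fourier_neg, ← fourier_add, neg_add_eq_sub]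
      rw [h2, ← h1, ← h1]
      simp only [φ₀, mul_pow, map_mul, map_pow, Complex.conj_ofReal]
      push_cast
      ring
    simp_rw [hsplit]
    rw [integral_prod_mul (fun z : UnitAddCircle => fourier ((n : ℤ) - m) z)
      (fun t : ℝ => ((Real.sqrt t ^ (m + n) : ℝ) : ℂ)), integral_fourier_eq]
    by_cases h : m = n
    · subst h
      simp only [sub_self, if_true, one_mul]
      rw [integral_complex_ofReal, ← hval m]
      congr 1
      refine integral_congr_ae ?_
      filter_upwards [hν] with t ht
      rw [← two_mul, pow_mul, Real.sq_sqrt ht]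
    · have : (n : ℤ) - m ≠ 0 := by omega
      simp [h, this]
  let g : UnitAddCircle × ℝ ≃ᵐ ULift.{u} (UnitAddCircle × ℝ) := MeasurableEquiv.ulift.symm
  refine ⟨ULift.{u} (UnitAddCircle × ℝ), inferInstance, μ₀.map g, fun x => φ₀ x.down,
    hφ₀.comp measurable_down, fun n => ?_, fun m n => ?_⟩
  · exact (g.memLp_map_measure_iff).2 (hint₀ n)
  · rw [integral_map_equiv]
    exact hmom₀ m n

end Moments

section QNumbers

theorem qNum_zero (q : ℝ) : qNum q 0 = 0 := by
  unfold qNum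
  split_ifs <;> simp

theorem qNum_succ (q : ℝ) (n : ℕ) : qNum q (n + 1) = 1 + q * qNum q n := by
  unfold qNum
  split_ifs with h
  · rw [h]
    push_cast
    ring
  · have : 1 - q ≠ 0 := sub_ne_zero.2 (Ne.symm h)
    field_simp
    ring

theorem qNum_nonneg {q : ℝ} (hq : 0 < q) (n : ℕ) : 0 ≤ qNum q n := by
  induction n with
  | zero => rw [qNum_zero]
  | succ n ih =>
    rw [qNum_succ]
    positivity

theorem qNum_succ_pos {q : ℝ} (hq : 0 < q) (n : ℕ) : 0 < qNum q (n + 1) := by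
  have := qNum_nonneg hq n
  rw [qNum_succ]
  positivity

/-- The `q`-factorial `[n]_q!`. -/
def qFact (q : ℝ) (n : ℕ) : ℝ := ∏ j ∈ Finset.range n, qNum q (j + 1)

theorem qFact_succ (q : ℝ) (n : ℕ) : qFact q (n + 1) = qNum q (n + 1) * qFact q n := by
  rw [qFact, Finset.prod_range_succ, mul_comm, qFact]

theorem qFact_pos {q : ℝ} (hq : 0 < q) (n : ℕ) : 0 < qFact q n :=
  Finset.prod_pos fun j _ => qNum_succ_pos hq j

theorem qFact_one (n : ℕ) : qFact 1 n = n.factorial := by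
  induction n with
  | zero => simp [qFact]
  | succ n ih => rw [qFact_succ, ih, Nat.factorial_succ]; simp [qNum]

end QNumbers

section Radial

open MeasureTheory Filter Topology

/-- `c` is a Stieltjes moment sequence. -/
def IsStieltjesMoment (c : ℕ → ℝ) : Prop :=
  ∃ ν : Measure ℝ, SFinite ν ∧ (∀ᵐ t ∂ν, 0 ≤ t) ∧
    ∀ n : ℕ, ∫⁻ t, ENNReal.ofReal (t ^ n) ∂ν = ENNReal.ofReal (c n)

theorem isStieltjesMoment_factorial : IsStieltjesMoment fun n => n.factorial := by
  refine ⟨(volume.restrict (Set.Ioi 0)).withDensity fun t => ENNReal.ofReal (Real.exp (-t)),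
    inferInstance, ?_, fun n => ?_⟩
  · refine (withDensity_absolutelyContinuous _ _).ae_le ?_
    filter_upwards [ae_restrict_mem measurableSet_Ioi] with t ht using le_of_lt ht
  · have hs : (0 : ℝ) < (n : ℝ) + 1 := by positivity
    beta_reduce
    rw [lintegral_withDensity_eq_lintegral_mul _ (by fun_prop) (by fun_prop),
      ← Real.Gamma_nat_eq_factorial, Real.Gamma_eq_integral hs,
      ofReal_integral_eq_lintegral_ofReal (Real.GammaIntegral_convergent hs)]
    · refine setLIntegral_congr_fun measurableSet_Ioi fun t ht => ?_
      simp only [Pi.mul_apply]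
      rw [← ENNReal.ofReal_mul (Real.exp_pos _).le, add_sub_cancel_right, Real.rpow_natCast]
    · filter_upwards [ae_restrict_mem measurableSet_Ioi] with t ht
      have : (0 : ℝ) < t := ht
      positivity

/-- A family of point masses whose moments satisfy the recursion of `c` yields `c` after
normalization. -/
theorem isStieltjesMoment_of_hasSum {κ : Type*} [Countable κ] {c b : ℕ → ℝ} {w t : κ → ℝ}
    (hw : ∀ k, 0 ≤ w k) (ht : ∀ k, 0 ≤ t k) (hpos : ∃ k, 0 < w k) (hc0 : c 0 = 1)
    (hc : ∀ n, c (n + 1) = b n * c n) (h0 : Summable w)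
    (hrec : ∀ n m, HasSum (fun k => w k * t k ^ n) m →
      HasSum (fun k => w k * t k ^ (n + 1)) (b n * m)) :
    IsStieltjesMoment c := by
  have hsum : ∀ n, HasSum (fun k => w k * t k ^ n) ((∑' k, w k) * c n) := by
    intro n
    induction n with
    | zero => simpa [hc0] using h0.hasSum
    | succ n ih =>
      rw [hc, mul_left_comm]
      exact hrec n _ ih
  obtain ⟨k₀, hk₀⟩ := hpos
  have hM : 0 < ∑' k, w k := h0.tsum_pos hw k₀ hk₀
  have hsum' : ∀ n, HasSum (fun k => w k / (∑' k, w k) * t k ^ n) (c n) := by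
    intro n
    have h := (hsum n).div_const (∑' k, w k)
    rw [mul_div_cancel_left₀ _ hM.ne'] at h
    refine h.congr_fun fun k => ?_
    ring
  refine ⟨Measure.sum fun k => ENNReal.ofReal (w k / ∑' k, w k) • Measure.dirac (t k),
    inferInstance, ?_, fun n => ?_⟩
  · rw [Measure.ae_sum_iff]
    intro k
    refine Measure.ae_smul_measure ?_ _
    rw [ae_dirac_eq]
    exact ht k
  · rw [lintegral_sum_measure, ← (hsum' n).tsum_eq, ENNReal.ofReal_tsum_of_nonneg _ (hsum' n).summable]
    · congr 1
      ext k
      have := div_nonneg (hw k) hM.le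
      rw [lintegral_smul_measure, lintegral_dirac, ENNReal.ofReal_mul this, smul_eq_mul]
    · intro k
      exact mul_nonneg (div_nonneg (hw k) hM.le) (pow_nonneg (ht k) n)

/-- Weights of the measure solving the `q`-factorial moment problem for `q < 1`. -/
def qWeight (q : ℝ) (k : ℕ) : ℝ := ∏ j ∈ Finset.range k, q / (1 - q ^ (j + 1))

theorem isStieltjesMoment_qFact_of_lt_one {q : ℝ} (hq : 0 < q) (hq1 : q < 1) :
    IsStieltjesMoment (qFact q) := by
  have hlt : ∀ k : ℕ, 0 < 1 - q ^ (k + 1) := fun k =>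
    sub_pos.2 (pow_lt_one₀ hq.le hq1 k.succ_ne_zero)
  have h1q : 0 < 1 - q := sub_pos.2 hq1
  have hwpos : ∀ k, 0 < qWeight q k := fun k =>
    Finset.prod_pos fun j _ => div_pos hq (hlt j)
  have hwsucc : ∀ k, qWeight q (k + 1) = qWeight q k * (q / (1 - q ^ (k + 1))) := fun k =>
    Finset.prod_range_succ _ _
  refine isStieltjesMoment_of_hasSum (κ := ℕ) (b := fun n => qNum q (n + 1)) (w := qWeight q)
    (t := fun k => q ^ k / (1 - q)) (fun k => (hwpos k).le) (fun k => by positivity)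
    ⟨0, hwpos 0⟩ (by simp [qFact]) (qFact_succ q) ?_ fun n m hm => ?_
  · refine summable_of_ratio_test_tendsto_lt_one hq1 (.of_forall fun k => (hwpos k).ne') ?_
    have hratio : ∀ k, ‖qWeight q (k + 1)‖ / ‖qWeight q k‖ = q / (1 - q ^ (k + 1)) := by
      intro k
      rw [← norm_div, hwsucc, mul_div_cancel_left₀ _ (hwpos k).ne', Real.norm_eq_abs,
        abs_of_pos (div_pos hq (hlt k))]
    simp_rw [hratio]
    have hpow : Tendsto (fun k : ℕ => q ^ (k + 1)) atTop (𝓝 0) :=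
      (tendsto_add_atTop_iff_nat 1).2 (tendsto_pow_atTop_nhds_zero_of_lt_one hq.le hq1)
    have h := (tendsto_const_nhds (x := q)).div ((tendsto_const_nhds (x := (1 : ℝ))).sub hpow)
      (by norm_num)
    rw [sub_zero, div_one] at h
    exact h
  · have hshift : HasSum (fun k => qWeight q k * (1 - q ^ k) * (q ^ k / (1 - q)) ^ n)
        (q ^ (n + 1) * m) := by
      rw [← hasSum_nat_add_iff' 1]
      simp only [Finset.range_one, Finset.sum_singleton, pow_zero, sub_self, mul_zero, zero_mul,
        sub_zero]
      refine (hm.mul_left (q ^ (n + 1))).congr_fun fun k => ?_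
      have := (hlt k).ne'
      rw [hwsucc, pow_succ' q k, mul_div_assoc q, mul_pow, pow_succ q n]
      rw [pow_succ'] at this
      field_simp
    have hval : qNum q (n + 1) * m = (m - q ^ (n + 1) * m) / (1 - q) := by
      rw [qNum, if_neg hq1.ne]
      ring
    rw [hval]
    refine ((hm.sub hshift).div_const (1 - q)).congr_fun fun k => ?_
    rw [pow_succ (q ^ k / (1 - q)) n]
    ring

/-- Weights of a measure solving the `q`-factorial moment problem for `1 < q`. -/
def qWeightInt (q : ℝ) : ℤ → ℝ
  | .ofNat k => ∏ j ∈ Finset.range k, q / (1 + q ^ (j + 1))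
  | .negSucc k => ∏ j ∈ Finset.range (k + 1), (1 + (q ^ j)⁻¹) / q

theorem qWeightInt_pos {q : ℝ} (hq : 0 < q) (k : ℤ) : 0 < qWeightInt q k := by
  cases k with
  | ofNat k => exact Finset.prod_pos fun j _ => by positivity
  | negSucc k => exact Finset.prod_pos fun j _ => by positivity

theorem qWeightInt_rec {q : ℝ} (hq : 0 < q) (k : ℤ) :
    qWeightInt q k * (1 + q ^ k) = q * qWeightInt q (k - 1) := by
  rcases k with (_ | k) | k
  · have : (Int.ofNat 0 - 1 : ℤ) = .negSucc 0 := rfl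
    rw [this]
    simp only [qWeightInt, Finset.prod_range_succ, Finset.prod_range_zero]
    simp
    field_simp
  · have : (Int.ofNat (k + 1) - 1 : ℤ) = .ofNat k := by simp
    rw [this]
    simp only [qWeightInt, Finset.prod_range_succ, Int.ofNat_eq_natCast, zpow_natCast]
    field_simp
  · have : (Int.negSucc k - 1 : ℤ) = .negSucc (k + 1) := rfl
    rw [this]
    simp only [qWeightInt, Finset.prod_range_succ _ (k + 1), zpow_negSucc]
    rw [mul_comm q, mul_assoc, div_mul_cancel₀ _ hq.ne']

theorem summable_qWeightInt {q : ℝ} (hq1 : 1 < q) : Summable (qWeightInt q) := by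
  have hq : 0 < q := one_pos.trans hq1
  have hpos := qWeightInt_pos hq
  have hpow : Tendsto (fun k : ℕ => q ^ (k + 1)) atTop atTop :=
    (tendsto_add_atTop_iff_nat 1).2 (tendsto_pow_atTop_atTop_of_one_lt hq1)
  refine Summable.of_nat_of_neg_add_one ?_ ?_
  · refine summable_of_ratio_test_tendsto_lt_one one_pos
      (l := 0) (.of_forall fun k => (hpos _).ne') ?_
    have hratio : ∀ k : ℕ, ‖qWeightInt q ((k + 1 : ℕ) : ℤ)‖ / ‖qWeightInt q (k : ℤ)‖
        = q / (1 + q ^ (k + 1)) := by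
      intro k
      have h := qWeightInt_rec hq ((k + 1 : ℕ) : ℤ)
      rw [zpow_natCast, Nat.cast_succ, add_sub_cancel_right, ← Nat.cast_succ] at h
      rw [Real.norm_of_nonneg (hpos _).le, Real.norm_of_nonneg (hpos _).le,
        div_eq_div_iff (hpos _).ne' (by positivity)]
      exact h
    simp_rw [hratio]
    exact (tendsto_atTop_add_const_left _ 1 hpow).const_div_atTop q
  · have hneg : ∀ k : ℕ, (-((k : ℤ) + 1)) = .negSucc k := fun k => (Int.negSucc_eq k).symm
    refine summable_of_ratio_test_tendsto_lt_one (inv_lt_one_of_one_lt₀ hq1)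
      (.of_forall fun k => (hpos _).ne') ?_
    have hratio : ∀ k : ℕ, ‖qWeightInt q (-(((k + 1 : ℕ) : ℤ) + 1))‖ /
        ‖qWeightInt q (-((k : ℤ) + 1))‖ = (1 + (q ^ (k + 1))⁻¹) / q := by
      intro k
      have h := qWeightInt_rec hq (.negSucc k)
      rw [zpow_negSucc] at h
      have hk : Int.negSucc k - 1 = .negSucc (k + 1) := rfl
      rw [hk] at h
      rw [hneg, hneg, Real.norm_of_nonneg (hpos _).le, Real.norm_of_nonneg (hpos _).le,
        div_eq_div_iff (hpos _).ne' hq.ne']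
      linarith
    simp_rw [hratio]
    have h := ((tendsto_const_nhds (x := (1 : ℝ))).add hpow.inv_tendsto_atTop).div_const q
    simpa using h

theorem isStieltjesMoment_qFact_of_one_lt {q : ℝ} (hq1 : 1 < q) :
    IsStieltjesMoment (qFact q) := by
  have hq : 0 < q := one_pos.trans hq1
  have h1q : 0 < q - 1 := sub_pos.2 hq1
  refine isStieltjesMoment_of_hasSum (κ := ℤ) (b := fun n => qNum q (n + 1)) (w := qWeightInt q)
    (t := fun k => q ^ k / (q - 1)) (fun k => (qWeightInt_pos hq k).le) (fun k => by positivity)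
    ⟨0, qWeightInt_pos hq 0⟩ (by simp [qFact]) (qFact_succ q) (summable_qWeightInt hq1)
    fun n m hm => ?_
  have hshift : HasSum (fun k : ℤ => qWeightInt q k * (1 + q ^ k) * (q ^ k / (q - 1)) ^ n)
      (q ^ (n + 1) * m) := by
    have h := (Equiv.subRight (1 : ℤ)).hasSum_iff.2 (hm.mul_left (q ^ (n + 1)))
    refine h.congr_fun fun k => ?_
    simp only [Function.comp_apply, Equiv.subRight_apply]
    rw [qWeightInt_rec hq, zpow_sub_one₀ hq.ne']
    simp only [div_pow, mul_pow, inv_pow]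
    field_simp
    ring
  have hval : qNum q (n + 1) * m = (q ^ (n + 1) * m - m) / (q - 1) := by
    rw [qNum, if_neg hq1.ne', ← neg_sub q 1, ← neg_sub _ (1 : ℝ), neg_div_neg_eq]
    ring
  rw [hval]
  refine ((hshift.sub hm).div_const (q - 1)).congr_fun fun k => ?_
  rw [pow_succ (q ^ k / (q - 1)) n]
  ring

theorem isStieltjesMoment_qFact {q : ℝ} (hq : 0 < q) : IsStieltjesMoment (qFact q) := by
  rcases lt_trichotomy q 1 with h | rfl | h
  · exact isStieltjesMoment_qFact_of_lt_one hq h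
  · rw [funext qFact_one]
    exact isStieltjesMoment_factorial
  · exact isStieltjesMoment_qFact_of_one_lt h

end Radial

/-- For `q > 0`, the closure `S` of the unilateral weighted shift
`e n ↦ √([n+1]_q) e (n+1)` (with domain the span of the orthonormal basis `(e n)`) is
subnormal and admits a normal extension which is both tight and `*`-tight; in particular
`dom S = dom S*`. -/
theorem stmt16 (q : ℝ) (hq : 0 < q) (e : HilbertBasis ℕ ℂ H) (S₀ : H →ₗ.[ℂ] H)
    (hdom : S₀.domain = Submodule.span ℂ (Set.range (e : ℕ → H)))
    (hval : ∀ (n : ℕ) (hn : e n ∈ S₀.domain),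
      S₀ ⟨e n, hn⟩ = ((Real.sqrt (qNum q (n + 1)) : ℝ) : ℂ) • e (n + 1))
    (S : H →ₗ.[ℂ] H) (hS : S = S₀.closure) :
    (∃ E : NormalExtension.{u, u} S, E.Tight ∧ E.StarTight) ∧
      S.domain = S.adjoint.domain := by
  subst hS
  obtain ⟨ν, _, hν, hmom⟩ := isStieltjesMoment_qFact hq
  obtain ⟨X, _, μ, φ, hφ, hint, horth⟩ :=
    exists_orthogonal_powers.{u} hν (fun n => (qFact_pos hq n).le) hmom
  have hsq : ∀ n, Real.sqrt (qNum q (n + 1)) ^ 2 = qNum q (n + 1) := fun n =>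
    Real.sq_sqrt (qNum_succ_pos hq n).le
  obtain ⟨ι, hι⟩ := exists_isometry_of_moments e (a := fun n => Real.sqrt (qNum q (n + 1)))
    (fun n => Real.sqrt_pos.2 (qNum_succ_pos hq n)) (qFact_pos hq)
    (fun n => by rw [hsq, qFact_succ]) hint horth
  exact exists_tight_of_shift (a := fun n => Real.sqrt (qNum q (n + 1))) (C := q) hdom hval
    (fun n => by rw [hsq, hsq, qNum_succ]) (mulOp_isClosed hφ) (mulOp_isNormal hφ) hι
end
end
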